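/- arXiv:1304.0562 — 3 statements merged into one kernel-verified Lean document; each statement's English description precedes it below -/
import Mathlib

section
/- There exists a universal constant C such that for every a ≥ π with μ = √(1 − π²/a²) ≥ 1/2, every t > 0, every r ∈ [0,a] and every x ∈ [r + a/20, a]: |∫_r^a 𝔭_t(x,y) dy − (2π(1+μr)·e^{μ(a−r)}/a³)·w_Z(x)·θ̄(t/a²)| ≤ C·(2π(1+μr)·e^{μ(a−r)}/a³)·((1 + r² + (a−x)²)/a)·w_Y(x). -/
open Real MeasureTheory Set Filter

/-- Transition density of Brownian motion killed upon exiting `(0,a)`. -/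
noncomputable def pker (a t x y : ℝ) : ℝ :=
  (2/a) * ∑' n : ℕ, Real.exp (-(π^2) * ((n : ℝ) + 1)^2 * t / (2 * a^2)) *
    Real.sin (π * ((n : ℝ) + 1) * x / a) * Real.sin (π * ((n : ℝ) + 1) * y / a)

/-- `μ = √(1 − π²/a²)`. -/
noncomputable def muFn (a : ℝ) : ℝ := Real.sqrt (1 - π^2 / a^2)

/-- `w_Z(x) = a·e^{μ(x−a)}·sin(πx/a)`. -/
noncomputable def wZ (a x : ℝ) : ℝ := a * Real.exp (muFn a * (x - a)) * Real.sin (π * x / a)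

/-- `w_Y(x) = e^{μ(x−a)}`. -/
noncomputable def wY (a x : ℝ) : ℝ := Real.exp (muFn a * (x - a))

/-- Density of the branching Brownian motion with drift `−μ` before absorption. -/
noncomputable def pdens (a t x y : ℝ) : ℝ :=
  Real.exp (muFn a * (x - y) + π^2 * t / (2 * a^2)) * pker a t x y

/-- `θ̄(t) = ∑_{n≥1} (−1)^{n+1}·n²·exp(−π²(n²−1)t/2)`. -/
noncomputable def thetaBar (t : ℝ) : ℝ :=
  ∑' n : ℕ, (-1 : ℝ)^n * ((n : ℝ) + 1)^2 *
    Real.exp (-(π^2) * (((n : ℝ) + 1)^2 - 1) * t / 2)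

/-- Exponential coefficient of the series. -/
noncomputable def ec (s : ℝ) (n : ℕ) : ℝ := Real.exp (-(π^2) * (((n : ℝ) + 1)^2 - 1) * s / 2)

/-- Frequency. -/
noncomputable def fq (n : ℕ) : ℝ := π * ((n : ℝ) + 1)

noncomputable def hm (s u : ℝ) : ℝ := ∑' n : ℕ, -((-1 : ℝ)^n * ec s n / fq n * Real.sin (fq n * u))
noncomputable def h0 (s u : ℝ) : ℝ := ∑' n : ℕ, -((-1 : ℝ)^n * ec s n * Real.cos (fq n * u))
noncomputable def h1 (s u : ℝ) : ℝ := ∑' n : ℕ, (-1 : ℝ)^n * ec s n * fq n * Real.sin (fq n * u)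
noncomputable def h2 (s u : ℝ) : ℝ := ∑' n : ℕ, (-1 : ℝ)^n * ec s n * fq n ^ 2 * Real.cos (fq n * u)
noncomputable def h3 (s u : ℝ) : ℝ :=
  ∑' n : ℕ, -((-1 : ℝ)^n * ec s n * fq n ^ 3 * Real.sin (fq n * u))

lemma ec_pos (s : ℝ) (n : ℕ) : 0 < ec s n := Real.exp_pos _

lemma fq_ge (n : ℕ) : 1 ≤ fq n := by
  unfold fq
  have := Real.pi_gt_three
  have : (0:ℝ) ≤ n := Nat.cast_nonneg n
  nlinarith

lemma fq_pos (n : ℕ) : 0 < fq n := lt_of_lt_of_le one_pos (fq_ge n)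

lemma ec_anti {s : ℝ} (hs : 1 ≤ s) (n : ℕ) : ec s n ≤ ec 1 n := by
  unfold ec
  apply Real.exp_le_exp.mpr
  have h0 : (0:ℝ) ≤ n := Nat.cast_nonneg n
  have : 0 ≤ π^2 * (((n : ℝ) + 1)^2 - 1) := by
    apply mul_nonneg (by positivity); nlinarith
  nlinarith

lemma sum_ec {s : ℝ} (hs : 0 < s) (k : ℕ) : Summable (fun n => ec s n * fq n ^ k) := by
  have hc : 0 < π^2 * s / 2 := by positivity
  have h := (summable_nat_add_iff 1).mpr (Real.summable_pow_mul_exp_neg_nat_mul k hc)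
  have h' := h.mul_left (π^k * Real.exp (π^2 * s / 2))
  refine Summable.of_nonneg_of_le (fun n => mul_nonneg (ec_pos s n).le (pow_nonneg (fq_pos n).le _)) ?_ h'
  intro n
  have : ec s n ≤ Real.exp (π^2 * s / 2) * Real.exp (-(π^2 * s / 2) * ((n + 1 : ℕ) : ℝ)) := by
    rw [← Real.exp_add]
    unfold ec
    apply Real.exp_le_exp.mpr
    have h0 : (0:ℝ) ≤ n := Nat.cast_nonneg n
    push_cast
    have : 0 ≤ (π^2 * s / 2) * ((((n : ℝ) + 1)^2 - 1) - n) := by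
      apply mul_nonneg hc.le; nlinarith
    nlinarith
  calc ec s n * fq n ^ k ≤ (Real.exp (π^2 * s / 2) * Real.exp (-(π^2 * s / 2) * ((n + 1 : ℕ) : ℝ))) * fq n ^ k := by
        apply mul_le_mul_of_nonneg_right this (pow_nonneg (fq_pos n).le _)
    _ = _ := by
        unfold fq; push_cast; rw [mul_pow]; ring

lemma abs_sgn (n : ℕ) (A c : ℝ) (hA : 0 ≤ A) (hc : |c| ≤ 1) : |(-1 : ℝ)^n * A * c| ≤ A := by
  rw [abs_mul, abs_mul, abs_pow, abs_neg, abs_one, one_pow, one_mul, abs_of_nonneg hA]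
  exact mul_le_of_le_one_right hA hc

lemma bd0 (s u : ℝ) (n : ℕ) : ‖-((-1 : ℝ)^n * ec s n * Real.cos (fq n * u))‖ ≤ ec s n * fq n ^ 0 := by
  rw [norm_neg, pow_zero, mul_one]
  exact abs_sgn n _ _ (ec_pos s n).le (Real.abs_cos_le_one _)

lemma bd1 (s u : ℝ) (n : ℕ) : ‖(-1 : ℝ)^n * ec s n * fq n * Real.sin (fq n * u)‖ ≤ ec s n * fq n ^ 1 := by
  rw [pow_one, mul_assoc ((-1 : ℝ)^n)]
  exact abs_sgn n _ _ (mul_nonneg (ec_pos s n).le (fq_pos n).le) (Real.abs_sin_le_one _)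

lemma bd2 (s u : ℝ) (n : ℕ) : ‖(-1 : ℝ)^n * ec s n * fq n ^ 2 * Real.cos (fq n * u)‖ ≤ ec s n * fq n ^ 2 := by
  rw [mul_assoc ((-1 : ℝ)^n)]
  exact abs_sgn n _ _ (mul_nonneg (ec_pos s n).le (pow_nonneg (fq_pos n).le _)) (Real.abs_cos_le_one _)

lemma bd3 (s u : ℝ) (n : ℕ) : ‖-((-1 : ℝ)^n * ec s n * fq n ^ 3 * Real.sin (fq n * u))‖ ≤ ec s n * fq n ^ 3 := by
  rw [norm_neg, mul_assoc ((-1 : ℝ)^n)]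
  exact abs_sgn n _ _ (mul_nonneg (ec_pos s n).le (pow_nonneg (fq_pos n).le _)) (Real.abs_sin_le_one _)

lemma dsin (A w u : ℝ) : HasDerivAt (fun u => A * Real.sin (w * u)) (A * w * Real.cos (w * u)) u := by
  have h := ((hasDerivAt_id u).const_mul w).sin.const_mul A
  refine h.congr_deriv ?_
  simp only [id]; ring

lemma dcos (A w u : ℝ) : HasDerivAt (fun u => A * Real.cos (w * u)) (-(A * w * Real.sin (w * u))) u := by
  have h := ((hasDerivAt_id u).const_mul w).cos.const_mul A
  refine h.congr_deriv ?_
  simp only [id]; ring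

lemma hm_deriv {s : ℝ} (hs : 0 < s) (u : ℝ) : HasDerivAt (hm s) (h0 s u) u := by
  unfold h0
  refine hasDerivAt_tsum (y₀ := 0) (sum_ec hs 0) (g' := fun n u => -((-1 : ℝ)^n * ec s n * Real.cos (fq n * u))) ?_ (fun n y => bd0 s y n) ?_ u
  · intro n y
    refine (dsin ((-1 : ℝ)^n * ec s n / fq n) (fq n) y).neg.congr_deriv ?_
    have := (fq_pos n).ne'
    field_simp
  · simp

lemma h0_deriv {s : ℝ} (hs : 0 < s) (u : ℝ) : HasDerivAt (h0 s) (h1 s u) u := by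
  unfold h1
  refine hasDerivAt_tsum (y₀ := 0) (sum_ec hs 1) (g' := fun n u => (-1 : ℝ)^n * ec s n * fq n * Real.sin (fq n * u)) ?_ (fun n y => bd1 s y n) ?_ u
  · intro n y
    refine (dcos ((-1 : ℝ)^n * ec s n) (fq n) y).neg.congr_deriv ?_
    ring
  · exact Summable.of_norm_bounded (sum_ec hs 0) (bd0 s 0)

lemma h1_deriv {s : ℝ} (hs : 0 < s) (u : ℝ) : HasDerivAt (h1 s) (h2 s u) u := by
  unfold h2
  refine hasDerivAt_tsum (y₀ := 0) (sum_ec hs 2) (g' := fun n u => (-1 : ℝ)^n * ec s n * fq n ^ 2 * Real.cos (fq n * u)) ?_ (fun n y => bd2 s y n) ?_ u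
  · intro n y
    refine (dsin ((-1 : ℝ)^n * ec s n * fq n) (fq n) y).congr_deriv ?_
    ring
  · exact Summable.of_norm_bounded (sum_ec hs 1) (bd1 s 0)

lemma h2_deriv {s : ℝ} (hs : 0 < s) (u : ℝ) : HasDerivAt (h2 s) (h3 s u) u := by
  unfold h3
  refine hasDerivAt_tsum (y₀ := 0) (sum_ec hs 3) (g' := fun n u => -((-1 : ℝ)^n * ec s n * fq n ^ 3 * Real.sin (fq n * u))) ?_ (fun n y => bd3 s y n) ?_ u
  · intro n y
    refine (dcos ((-1 : ℝ)^n * ec s n * fq n ^ 2) (fq n) y).congr_deriv ?_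
    ring
  · exact Summable.of_norm_bounded (sum_ec hs 2) (bd2 s 0)

lemma h1_zero (s : ℝ) : h1 s 0 = 0 := by simp [h1]

lemma h2_zero (s : ℝ) : h2 s 0 = π^2 * thetaBar s := by
  unfold h2 thetaBar
  rw [← tsum_mul_left]
  refine tsum_congr fun n => ?_
  rw [mul_zero, Real.cos_zero]
  unfold ec fq; ring

/-- Uniform bound for a large time. -/
lemma tail_bd {s : ℝ} (hs : 1 ≤ s) (k : ℕ) (f : ℕ → ℝ) (hf : ∀ n, ‖f n‖ ≤ ec s n * fq n ^ k) :
    |∑' n, f n| ≤ ∑' n, ec 1 n * fq n ^ k := by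
  rw [← Real.norm_eq_abs]
  refine tsum_of_norm_bounded (sum_ec one_pos k).hasSum ?_
  intro n
  refine (hf n).trans ?_
  exact mul_le_mul_of_nonneg_right (ec_anti hs n) (pow_nonneg (fq_pos n).le _)

lemma hm_period {s : ℝ} (u : ℝ) : hm s (u + 1) = hm s (u - 1) := by
  unfold hm
  refine tsum_congr fun n => ?_
  have : fq n * (u + 1) = fq n * (u - 1) + (n + 1 : ℕ) * (2 * π) := by
    unfold fq; push_cast; ring
  rw [this, Real.sin_add_nat_mul_two_pi]

lemma sin_flip (n : ℕ) (z : ℝ) : Real.sin (fq n * (1 - z)) = (-1 : ℝ)^n * Real.sin (fq n * z) := by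
  have : fq n * (1 - z) = ((n + 1 : ℕ) : ℝ) * π - fq n * z := by unfold fq; push_cast; ring
  rw [this, Real.sin_nat_mul_pi_sub]
  ring

/-- The kernel in terms of `h0`. -/
lemma pdens_eq {a t : ℝ} (ha : 0 < a) (ht : 0 < t) (x y : ℝ) :
    pdens a t x y = Real.exp (muFn a * (x - y)) *
      ((1 / a) * (h0 (t / a^2) ((a - x) / a + y / a) - h0 (t / a^2) ((a - x) / a - y / a))) := by
  have hs : 0 < t / a^2 := by positivity
  unfold pdens pker h0
  rw [← Summable.tsum_sub (Summable.of_norm_bounded (sum_ec hs 0) (bd0 _ _))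
    (Summable.of_norm_bounded (sum_ec hs 0) (bd0 _ _)), Real.exp_add]
  have key : ∀ A B E F : ℝ, E * 2 * A = B → F * E * ((2 / a) * A) = F * (1 / a * B) := by
    intro A B E F h; rw [← h]; ring
  apply key
  rw [← tsum_mul_left]
  refine tsum_congr fun n => ?_
  have e1 : ec (t / a^2) n = Real.exp (π^2 * t / (2 * a^2)) * Real.exp (-(π^2) * ((n : ℝ) + 1)^2 * t / (2 * a^2)) := by
    rw [← Real.exp_add]; unfold ec; congr 1; field_simp; ring
  have e2 : π * ((n : ℝ) + 1) * x / a = fq n * (1 - (a - x) / a) := by unfold fq; field_simp; ring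
  have e3 : π * ((n : ℝ) + 1) * y / a = fq n * (y / a) := by unfold fq; ring
  rw [e1, e2, e3, sin_flip, mul_add, mul_sub, Real.cos_add, Real.cos_sub]
  ring
/-! Gaussian side -/

noncomputable def gk (s : ℝ) (n : ℤ) (u : ℝ) : ℝ :=
  √(2 / (π * s)) * Real.exp (-(2 * (n : ℝ) - 1 - u)^2 / (2 * s))
noncomputable def gp1 (s v : ℝ) : ℝ := v / s
noncomputable def gp2 (s v : ℝ) : ℝ := v^2 / s^2 - 1 / s
noncomputable def gp3 (s v : ℝ) : ℝ := v^3 / s^3 - 3 * v / s^2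

noncomputable def bz (n : ℤ) : ℝ := (1536 * 125001 * 50^5) * (1 / (2 * (n : ℝ) - 1)^2)

lemma bz_sum : Summable bz := by
  unfold bz
  apply Summable.mul_left
  have h := (Real.summable_one_div_int_pow (p := 2)).mpr (by norm_num)
  have hi : Function.Injective (fun n : ℤ => 2 * n - 1) := by intro a b h; simp at h; exact h
  have := h.comp_injective hi
  refine this.congr fun n => ?_
  simp

lemma gk_nonneg (s : ℝ) (n : ℤ) (u : ℝ) : 0 ≤ gk s n u := by unfold gk; positivity

lemma gk_bd {s : ℝ} (hs : 0 < s) (hs1 : s ≤ 1) (n : ℤ) {u : ℝ} (hu : u ∈ Ioo (-(49/50) : ℝ) (49/50)) (P : ℝ)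
    (hP : |P| ≤ 4 * (1 + |2 * (n : ℝ) - 1 - u|^3) / s^3) : ‖gk s n u * P‖ ≤ bz n := by
  set v := 2 * (n : ℝ) - 1 - u with hv
  set w := |v| with hw
  have hm : (1:ℝ) ≤ |2 * (n : ℝ) - 1| := by
    have : (1:ℤ) ≤ |2 * n - 1| := by
      apply Int.one_le_abs; omega
    exact_mod_cast this
  have hwm : |2 * (n : ℝ) - 1| / 50 ≤ w := by
    have h1 : |2 * (n : ℝ) - 1| - |u| ≤ w := abs_sub_abs_le_abs_sub _ _
    have h2 : |u| ≤ 49/50 := abs_le.mpr ⟨hu.1.le, hu.2.le⟩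
    linarith
  have hw50 : 1/50 ≤ w := by linarith
  have hw0 : 0 < w := by linarith
  have hk : √(2 / (π * s)) ≤ 1 / s := by
    rw [Real.sqrt_le_left (by positivity), div_pow, div_le_div_iff₀ (by positivity) (by positivity)]
    have := Real.pi_gt_three
    have h3 : s^2 ≤ s := by nlinarith
    nlinarith
  have hq : Real.exp (-v^2 / (2 * s)) ≤ 384 * s^4 / w^8 := by
    have h := Real.pow_div_factorial_le_exp (x := v^2 / (2 * s)) (by positivity) 4
    have e : -v^2 / (2 * s) = -(v^2 / (2*s)) := by ring
    rw [e, Real.exp_neg]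
    have hv2 : v^2 = w^2 := (sq_abs v).symm
    rw [hv2] at h ⊢
    have hp : 0 < (w^2 / (2 * s))^4 / (Nat.factorial 4 : ℝ) := by positivity
    refine (inv_anti₀ hp h).trans (le_of_eq ?_)
    have : (Nat.factorial 4 : ℝ) = 24 := by norm_num [Nat.factorial]
    rw [this]
    field_simp
    norm_num
  have hg : gk s n u ≤ 384 * s^3 / w^8 := by
    calc gk s n u ≤ (1 / s) * (384 * s^4 / w^8) := mul_le_mul hk hq (Real.exp_pos _).le (by positivity)
      _ = _ := by field_simp
  rw [norm_mul, Real.norm_eq_abs, Real.norm_eq_abs, abs_of_nonneg (gk_nonneg s n u)]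
  calc gk s n u * |P| ≤ (384 * s^3 / w^8) * (4 * (1 + w^3) / s^3) :=
        mul_le_mul hg hP (abs_nonneg _) (by positivity)
    _ = 1536 * (1 + w^3) / w^8 := by field_simp; norm_num
    _ ≤ 1536 * (125001 * w^3) / w^8 := by
        gcongr
        have : (1/50:ℝ)^3 ≤ w^3 := by gcongr
        norm_num at this
        linarith
    _ = 1536 * 125001 * (1 / w)^3 * (1 / w)^2 := by field_simp
    _ ≤ 1536 * 125001 * 50^3 * (50 / |2 * (n : ℝ) - 1|)^2 := by
        have a1 : 1 / w ≤ 50 := by rw [div_le_iff₀ hw0]; linarith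
        have a2 : 1 / w ≤ 50 / |2 * (n : ℝ) - 1| := by
          rw [div_le_div_iff₀ hw0 (by linarith)]; linarith
        gcongr
    _ = bz n := by
        unfold bz
        rw [div_pow, sq_abs]; ring

lemma w_le (w : ℝ) (hw : 0 ≤ w) : w ≤ 1 + w^3 ∧ w^2 ≤ 1 + w^3 := by
  constructor <;> nlinarith [mul_nonneg hw (sq_nonneg (w - 1)), sq_nonneg (w-1), mul_nonneg hw hw]

lemma gp0_bd {s : ℝ} (hs : 0 < s) (hs1 : s ≤ 1) (v : ℝ) : |(1:ℝ)| ≤ 4 * (1 + |v|^3) / s^3 := by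
  have h3 : s^3 ≤ 1 := pow_le_one₀ hs.le hs1
  have := pow_nonneg (abs_nonneg v) 3
  rw [abs_one, le_div_iff₀ (by positivity)]
  linarith

lemma gp1_bd {s : ℝ} (hs : 0 < s) (hs1 : s ≤ 1) (v : ℝ) : |gp1 s v| ≤ 4 * (1 + |v|^3) / s^3 := by
  have h2 : s^2 ≤ 1 := pow_le_one₀ hs.le hs1
  have h0 := abs_nonneg v
  have hp := pow_nonneg (abs_nonneg v) 3
  have := (w_le |v| h0).1
  unfold gp1
  rw [abs_div, abs_of_pos hs, div_le_div_iff₀ hs (by positivity)]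
  have : |v| * s^2 ≤ 4 * (1 + |v|^3) := by nlinarith
  nlinarith

lemma gp2_bd {s : ℝ} (hs : 0 < s) (hs1 : s ≤ 1) (v : ℝ) : |gp2 s v| ≤ 4 * (1 + |v|^3) / s^3 := by
  have h2 : s^2 ≤ 1 := pow_le_one₀ hs.le hs1
  have h0 := abs_nonneg v
  have hp := pow_nonneg (abs_nonneg v) 3
  have h4 := (w_le |v| h0).2
  unfold gp2
  refine (abs_sub _ _).trans ?_
  rw [abs_div, abs_div, abs_pow, abs_pow, abs_one, abs_of_pos hs]
  have e : |v|^2 / s^2 + 1 / s = (|v|^2 * s + s^2) / s^3 := by field_simp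
  rw [e]
  gcongr
  have : |v|^2 * s ≤ |v|^2 := mul_le_of_le_one_right (by positivity) hs1
  linarith

lemma gp3_bd {s : ℝ} (hs : 0 < s) (hs1 : s ≤ 1) (v : ℝ) : |gp3 s v| ≤ 4 * (1 + |v|^3) / s^3 := by
  have h0 := abs_nonneg v
  have hp := pow_nonneg (abs_nonneg v) 3
  have h4 := (w_le |v| h0).1
  unfold gp3
  refine (abs_sub _ _).trans ?_
  rw [abs_div, abs_div, abs_pow, abs_pow, abs_pow, abs_mul, abs_of_pos hs]
  have e : |v|^3 / s^3 + |(3:ℝ)| * |v| / s^2 = (|v|^3 + 3 * (|v| * s)) / s^3 := by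
    rw [abs_of_pos (by norm_num : (0:ℝ) < 3)]; field_simp
  rw [e]
  gcongr
  have : |v| * s ≤ |v| := mul_le_of_le_one_right (by positivity) hs1
  linarith

lemma gk_d {s : ℝ} (hs : 0 < s) (n : ℤ) (u : ℝ) :
    HasDerivAt (gk s n) (gk s n u * gp1 s (2 * (n:ℝ) - 1 - u)) u := by
  unfold gk gp1
  have hv : HasDerivAt (fun u : ℝ => 2 * (n:ℝ) - 1 - u) (-1) u := (hasDerivAt_id u).const_sub _
  refine ((((hv.pow 2).neg).div_const (2 * s)).exp.const_mul _).congr_deriv ?_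
  simp only [Pi.neg_apply, Pi.pow_apply]
  field_simp
  push_cast
  ring

lemma gk_d1 {s : ℝ} (hs : 0 < s) (n : ℤ) (u : ℝ) :
    HasDerivAt (fun u => gk s n u * gp1 s (2 * (n:ℝ) - 1 - u)) (gk s n u * gp2 s (2 * (n:ℝ) - 1 - u)) u := by
  have hv : HasDerivAt (fun u : ℝ => 2 * (n:ℝ) - 1 - u) (-1) u := (hasDerivAt_id u).const_sub _
  have h1 : HasDerivAt (fun u : ℝ => gp1 s (2 * (n:ℝ) - 1 - u)) (-1 / s) u := hv.div_const s
  refine ((gk_d hs n u).mul h1).congr_deriv ?_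
  unfold gp1 gp2
  field_simp
  ring

lemma gk_d2 {s : ℝ} (hs : 0 < s) (n : ℤ) (u : ℝ) :
    HasDerivAt (fun u => gk s n u * gp2 s (2 * (n:ℝ) - 1 - u)) (gk s n u * gp3 s (2 * (n:ℝ) - 1 - u)) u := by
  have hv : HasDerivAt (fun u : ℝ => 2 * (n:ℝ) - 1 - u) (-1) u := (hasDerivAt_id u).const_sub _
  have h1 : HasDerivAt (fun u : ℝ => gp2 s (2 * (n:ℝ) - 1 - u)) (-2 * (2 * (n:ℝ) - 1 - u) / s^2) u := by
    refine (((hv.pow 2).div_const (s^2)).sub_const (1/s)).congr_deriv ?_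
    push_cast; ring
  refine ((gk_d hs n u).mul h1).congr_deriv ?_
  unfold gp1 gp2 gp3
  field_simp
  ring

noncomputable def H0 (s u : ℝ) : ℝ := ∑' n : ℤ, gk s n u
noncomputable def H1 (s u : ℝ) : ℝ := ∑' n : ℤ, gk s n u * gp1 s (2 * (n:ℝ) - 1 - u)
noncomputable def H2 (s u : ℝ) : ℝ := ∑' n : ℤ, gk s n u * gp2 s (2 * (n:ℝ) - 1 - u)
noncomputable def H3 (s u : ℝ) : ℝ := ∑' n : ℤ, gk s n u * gp3 s (2 * (n:ℝ) - 1 - u)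

lemma H0_d {s : ℝ} (hs : 0 < s) (hs1 : s ≤ 1) {u : ℝ} (hu : u ∈ Ioo (-(49/50) : ℝ) (49/50)) :
    HasDerivAt (H0 s) (H1 s u) u := by
  refine hasDerivAt_tsum_of_isPreconnected (y₀ := 0) bz_sum isOpen_Ioo isPreconnected_Ioo
    (fun n y _ => gk_d hs n y) (fun n y hy => gk_bd hs hs1 n hy _ (gp1_bd hs hs1 _)) (by norm_num) ?_ hu
  refine Summable.of_norm_bounded bz_sum fun n => ?_
  have := gk_bd hs hs1 n (u := 0) (by norm_num) 1 (gp0_bd hs hs1 _)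
  rwa [mul_one] at this

lemma H1_d {s : ℝ} (hs : 0 < s) (hs1 : s ≤ 1) {u : ℝ} (hu : u ∈ Ioo (-(49/50) : ℝ) (49/50)) :
    HasDerivAt (H1 s) (H2 s u) u :=
  hasDerivAt_tsum_of_isPreconnected (y₀ := 0) bz_sum isOpen_Ioo isPreconnected_Ioo
    (fun n y _ => gk_d1 hs n y) (fun n y hy => gk_bd hs hs1 n hy _ (gp2_bd hs hs1 _)) (by norm_num)
    (Summable.of_norm_bounded bz_sum fun n => gk_bd hs hs1 n (u := 0) (by norm_num) _ (gp1_bd hs hs1 _)) hu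

lemma H2_d {s : ℝ} (hs : 0 < s) (hs1 : s ≤ 1) {u : ℝ} (hu : u ∈ Ioo (-(49/50) : ℝ) (49/50)) :
    HasDerivAt (H2 s) (H3 s u) u :=
  hasDerivAt_tsum_of_isPreconnected (y₀ := 0) bz_sum isOpen_Ioo isPreconnected_Ioo
    (fun n y _ => gk_d2 hs n y) (fun n y hy => gk_bd hs hs1 n hy _ (gp3_bd hs hs1 _)) (by norm_num)
    (Summable.of_norm_bounded bz_sum fun n => gk_bd hs hs1 n (u := 0) (by norm_num) _ (gp2_bd hs hs1 _)) hu

lemma H2_bd {s : ℝ} (hs : 0 < s) (hs1 : s ≤ 1) {u : ℝ} (hu : u ∈ Ioo (-(49/50) : ℝ) (49/50)) :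
    |H2 s u| ≤ ∑' n, bz n := by
  rw [← Real.norm_eq_abs]
  exact tsum_of_norm_bounded bz_sum.hasSum fun n => gk_bd hs hs1 n hu _ (gp2_bd hs hs1 _)

lemma H3_bd {s : ℝ} (hs : 0 < s) (hs1 : s ≤ 1) {u : ℝ} (hu : u ∈ Ioo (-(49/50) : ℝ) (49/50)) :
    |H3 s u| ≤ ∑' n, bz n := by
  rw [← Real.norm_eq_abs]
  exact tsum_of_norm_bounded bz_sum.hasSum fun n => gk_bd hs hs1 n hu _ (gp3_bd hs hs1 _)

lemma H0_nonneg (s u : ℝ) : 0 ≤ H0 s u := tsum_nonneg fun n => gk_nonneg s n u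
/-- Poisson summation. -/
lemma poisson {s : ℝ} (hs : 0 < s) (u : ℝ) :
    H0 s u = 1 + 2 * Real.exp (-(π^2 * s / 2)) * h0 s u := by
  have hpi := Real.pi_pos
  have ha : 0 < ((π * s / 2 : ℝ) : ℂ).re := by rw [Complex.ofReal_re]; positivity
  have P := Complex.tsum_exp_neg_quadratic ha (Complex.I * ((u + 1) / 2 : ℝ))
  have hR : 1 / ((π * s / 2 : ℝ) : ℂ) ^ (1 / 2 : ℂ) * ∑' n : ℤ, Complex.exp (-π / ((π * s / 2 : ℝ) : ℂ) *
      (n + Complex.I * (Complex.I * ((u + 1) / 2 : ℝ))) ^ 2) = ((H0 s u : ℝ) : ℂ) := by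
    unfold H0 gk
    rw [Complex.ofReal_tsum, ← tsum_mul_left]
    refine tsum_congr fun n => ?_
    rw [Complex.ofReal_mul, Complex.ofReal_exp]
    congr 1
    · have e : ((1:ℂ) / 2) = ((1/2 : ℝ) : ℂ) := by push_cast; ring
      rw [e, ← Complex.ofReal_cpow (by positivity), ← Real.sqrt_eq_rpow, ← Complex.ofReal_one,
        ← Complex.ofReal_div, ← Real.sqrt_one, ← Real.sqrt_div (by norm_num)]
      congr 2
      field_simp
    · congr 1
      have hs' : (s:ℂ) ≠ 0 := by exact_mod_cast hs.ne'
      have hp' : (π:ℂ) ≠ 0 := by exact_mod_cast hpi.ne'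
      rw [← mul_assoc, Complex.I_mul_I]
      push_cast
      field_simp
      ring
  rw [hR] at P
  set f : ℤ → ℂ := fun n => Complex.exp (-π * ((π * s / 2 : ℝ) : ℂ) * n ^ 2 +
    2 * π * (Complex.I * ((u + 1) / 2 : ℝ)) * n) with hf
  have fe : ∀ m : ℤ, f m = ((Real.exp (-(π^2) * (m:ℝ)^2 * s / 2) : ℝ) : ℂ) *
      Complex.exp ((((m:ℝ) * (π * (u + 1)) : ℝ) : ℂ) * Complex.I) := by
    intro m
    rw [hf, Complex.ofReal_exp, ← Complex.exp_add]
    simp only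
    congr 1
    push_cast
    ring
  have fn : ∀ m : ℤ, ‖f m‖ = Real.exp (-(π^2) * (m:ℝ)^2 * s / 2) := by
    intro m
    rw [fe, norm_mul, Complex.norm_exp_ofReal_mul_I, mul_one, Complex.norm_real, Real.norm_eq_abs, abs_of_pos (Real.exp_pos _)]
  have ee : ∀ n : ℕ, Real.exp (-(π^2) * ((n:ℝ)+1)^2 * s / 2) = Real.exp (-(π^2 * s / 2)) * ec s n := by
    intro n; unfold ec; rw [← Real.exp_add]; congr 1; ring
  have hse : Summable fun n : ℕ => Real.exp (-(π^2) * ((n:ℝ)+1)^2 * s / 2) := by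
    simp_rw [ee]
    have := sum_ec hs 0
    simp only [pow_zero, mul_one] at this
    exact this.mul_left _
  have s1 : Summable fun n : ℕ => f (n + 1) := by
    refine Summable.of_norm_bounded hse fun n => ?_
    rw [fn]; push_cast; exact le_rfl
  have s2 : Summable fun n : ℕ => f (-(n + 1)) := by
    refine Summable.of_norm_bounded hse fun n => ?_
    rw [fn]; push_cast; rw [neg_sq]
  have T := tsum_of_add_one_of_neg_add_one s1 s2
  have hf0 : f 0 = 1 := by simp [hf]
  have T' : ∑' n : ℤ, f n = 1 + ∑' n : ℕ, (f (n + 1) + f (-(n + 1))) := by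
    rw [T, s1.tsum_add s2, hf0]; ring
  have : ((H0 s u : ℝ) : ℂ) = ((1 + 2 * Real.exp (-(π^2 * s / 2)) * h0 s u : ℝ) : ℂ) := by
    rw [← P]
    rw [T', Complex.ofReal_add, Complex.ofReal_one]
    congr 1
    unfold h0
    rw [← tsum_mul_left, Complex.ofReal_tsum]
    refine tsum_congr fun n => ?_
    rw [fe, fe]
    push_cast
    rw [neg_sq]
    have c := Complex.two_cos (((n:ℂ) + 1) * (π * (u + 1)))
    have hc : Complex.cos (((n:ℂ) + 1) * (π * (u + 1))) = -((-1)^n * Complex.cos (fq n * u)) := by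
      have : ((n:ℂ) + 1) * (π * (u + 1)) = fq n * u + ((n + 1 : ℕ) : ℂ) * π := by
        unfold fq; push_cast; ring
      rw [this, Complex.cos_antiperiodic.add_nat_mul_eq]
      ring
    have e2 := ee n
    have e3 : Complex.exp (-(π:ℂ)^2 * ((n:ℂ)+1)^2 * s / 2) = Complex.exp (-(π^2 * s / 2)) * (ec s n : ℂ) := by
      have := congrArg (fun r : ℝ => (r : ℂ)) e2
      simpa using this
    rw [e3, ← mul_add]
    have e4 : Complex.exp (((n:ℂ) + 1) * (π * (u + 1)) * Complex.I) + Complex.exp (-1 * ((n:ℂ) + 1) * (π * (u + 1)) * Complex.I) = 2 * -((-1)^n * Complex.cos (fq n * u)) := by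
      rw [← hc, c]
      congr 2
      ring
    have e5 : -((n:ℂ) + 1) = -1 * ((n:ℂ) + 1) := by ring
    rw [show (-((n:ℂ) + 1)) * (π * (u + 1)) * Complex.I = -1 * ((n:ℂ) + 1) * (π * (u + 1)) * Complex.I by ring] 
    rw [e4]
    ring
  exact_mod_cast this
lemma h0_eq {s : ℝ} (hs : 0 < s) (u : ℝ) : h0 s u = Real.exp (π^2 * s / 2) / 2 * (H0 s u - 1) := by
  rw [poisson hs u, Real.exp_neg]
  have := (Real.exp_pos (π^2 * s / 2)).ne'
  field_simp
  ring

lemma uniq_d {f f' F F' : ℝ → ℝ} {c : ℝ} (hf : ∀ u, HasDerivAt f (f' u) u)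
    (hF : ∀ u ∈ Ioo (-(49/50) : ℝ) (49/50), HasDerivAt F (F' u) u)
    (h : ∀ u ∈ Ioo (-(49/50) : ℝ) (49/50), f u = c * F u) :
    ∀ u ∈ Ioo (-(49/50) : ℝ) (49/50), f' u = c * F' u := by
  intro u hu
  have h1 : HasDerivAt f (c * F' u) u := by
    refine ((hF u hu).const_mul c).congr_of_eventuallyEq ?_
    filter_upwards [isOpen_Ioo.mem_nhds hu] with y hy using h y hy
  exact (hf u).unique h1

lemma deriv_bd : ∃ C : ℝ, 0 < C ∧ ∀ s : ℝ, 0 < s → ∀ u : ℝ, |u| ≤ 39/40 → |h2 s u| ≤ C ∧ |h3 s u| ≤ C := by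
  set A2 := ∑' n, ec 1 n * fq n ^ 2 with hA2
  set A3 := ∑' n, ec 1 n * fq n ^ 3 with hA3
  set B := Real.exp (π^2 / 2) * ∑' n, bz n with hB
  refine ⟨|A2| + |A3| + |B| + 1, by positivity, ?_⟩
  intro s hs u hu
  rcases le_total s 1 with h | h
  · have hu' : u ∈ Ioo (-(49/50) : ℝ) (49/50) := by
      have := abs_le.mp hu
      constructor <;> linarith [this.1, this.2]
    set c := Real.exp (π^2 * s / 2) / 2 with hc
    have hc0 : 0 ≤ c := by positivity
    have hcB : c ≤ Real.exp (π^2 / 2) := by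
      have : Real.exp (π^2 * s / 2) ≤ Real.exp (π^2 / 2) := by
        apply Real.exp_le_exp.mpr
        have : 0 < π^2 := by positivity
        nlinarith
      have := Real.exp_pos (π^2 * s / 2)
      linarith
    have i1 := uniq_d (F := fun u => H0 s u - 1) (c := c) (fun u => h0_deriv hs u)
      (fun u hu => (H0_d hs h hu).sub_const 1) (fun u _ => h0_eq hs u)
    have i2 := uniq_d (fun u => h1_deriv hs u) (fun u hu => H1_d hs h hu) i1
    have i3 := uniq_d (fun u => h2_deriv hs u) (fun u hu => H2_d hs h hu) i2
    have b : ∀ X : ℝ, |X| ≤ ∑' n, bz n → |c * X| ≤ |A2| + |A3| + |B| + 1 := by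
      intro X hX
      rw [abs_mul, abs_of_nonneg hc0]
      have : c * |X| ≤ B := mul_le_mul hcB hX (abs_nonneg _) (Real.exp_pos _).le
      have := le_abs_self B
      have := abs_nonneg A2
      have := abs_nonneg A3
      linarith
    rw [i2 u hu', i3 u hu']
    exact ⟨b _ (H2_bd hs h hu'), b _ (H3_bd hs h hu')⟩
  · have b2 : |h2 s u| ≤ A2 := tail_bd h 2 _ (fun n => bd2 s u n)
    have b3 : |h3 s u| ≤ A3 := tail_bd h 3 _ (fun n => bd3 s u n)
    have := le_abs_self A2
    have := le_abs_self A3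
    have := abs_nonneg A2
    have := abs_nonneg A3
    have := abs_nonneg B
    constructor <;> linarith

lemma sin_quad {w : ℝ} (hw : 0 ≤ w) : |w - Real.sin w| ≤ 2 * w^2 := by
  have h1 := Real.sin_le hw
  rw [abs_of_nonneg (by linarith)]
  rcases le_or_gt w 1 with h | h
  · rcases hw.eq_or_lt with h0 | h0
    · rw [← h0]; simp
    · have := Real.sin_gt_sub_cube h0
      nlinarith [mul_nonneg hw hw]
  · have := Real.neg_one_le_sin w
    nlinarith

/-- The main expansion. -/
lemma key_exp : ∃ C : ℝ, 0 < C ∧ ∀ s : ℝ, 0 < s → |thetaBar s| ≤ C ∧ ∀ ζ η : ℝ, 0 ≤ ζ → 0 ≤ η → ζ + η ≤ 39/40 →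
    |h0 s (ζ + η) - h0 s (ζ - η) - 2 * π * η * Real.sin (π * ζ) * thetaBar s| ≤ C * (η * (η^2 + ζ^2)) := by
  obtain ⟨C, hC, hb⟩ := deriv_bd
  have hpi := Real.pi_pos
  refine ⟨C + (4 * C + 4 * π^3 * C), by positivity, ?_⟩
  intro s hs
  have hth : |thetaBar s| ≤ C := by
    have h := (hb s hs 0 (by norm_num)).1
    rw [h2_zero, abs_mul, abs_of_pos (by positivity : 0 < π^2)] at h
    have : 1 ≤ π^2 := by nlinarith [Real.pi_gt_three]
    nlinarith [abs_nonneg (thetaBar s)]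
  have hp4 : 0 ≤ 4 * C + 4 * π^3 * C := by positivity
  refine ⟨by linarith, ?_⟩
  intro ζ η hζ hη hsum
  set R := ζ + η with hR
  have hR0 : 0 ≤ R := by positivity
  have hin : ∀ u ∈ Icc (-R) R, |u| ≤ 39/40 := fun u hu => (abs_le.mpr hu).trans hsum
  have hz : (0:ℝ) ∈ Icc (-R) R := ⟨by linarith, hR0⟩
  have s2 : ∀ u ∈ Icc (-R) R, |h2 s u - h2 s 0| ≤ C * R := by
    intro u hu
    have := Convex.norm_image_sub_le_of_norm_hasDerivWithin_le (f := h2 s) (f' := h3 s) (C := C)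
      (fun x _ => (h2_deriv hs x).hasDerivWithinAt) (fun x hx => (hb s hs x (hin x hx)).2) (convex_Icc (-R) R) hz hu
    simp only [Real.norm_eq_abs, sub_zero] at this
    exact this.trans (mul_le_mul_of_nonneg_left (abs_le.mpr hu) hC.le)
  have s1 : ∀ u ∈ Icc (-R) R, |h1 s u - u * h2 s 0| ≤ C * R * R := by
    intro u hu
    have := Convex.norm_image_sub_le_of_norm_hasDerivWithin_le (f := fun u => h1 s u - u * h2 s 0) (f' := fun u => h2 s u - 1 * h2 s 0) (C := C * R)
      (fun x _ => ((h1_deriv hs x).sub ((hasDerivAt_id x).mul_const _)).hasDerivWithinAt) (fun x hx => by rw [one_mul]; exact s2 x hx) (convex_Icc (-R) R) hz hu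
    simp only [Real.norm_eq_abs, sub_zero, h1_zero, zero_mul] at this
    exact this.trans (mul_le_mul_of_nonneg_left (abs_le.mpr hu) (by positivity))
  have s0 := Convex.norm_image_sub_le_of_norm_hasDerivWithin_le (f := fun u => h0 s u - u^2 / 2 * h2 s 0) (f' := fun u => h1 s u - u * h2 s 0) (C := C * R * R)
      (s := Icc (-R) R) (x := ζ - η) (y := ζ + η)
      (fun x _ => by
        refine HasDerivAt.hasDerivWithinAt ?_
        refine (h0_deriv hs x).sub ?_
        have := (((hasDerivAt_id x).pow 2).div_const 2).mul_const (h2 s 0)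
        refine this.congr_deriv ?_
        simp) s1 (convex_Icc (-R) R)
      ⟨by linarith, by linarith⟩ ⟨by linarith, by linarith⟩
  simp only [Real.norm_eq_abs] at s0
  rw [show ζ + η - (ζ - η) = 2 * η by ring, abs_of_nonneg (by positivity : 0 ≤ 2 * η), h2_zero] at s0
  have hsq := sin_quad (by positivity : 0 ≤ π * ζ)
  have split : h0 s (ζ + η) - h0 s (ζ - η) - 2 * π * η * Real.sin (π * ζ) * thetaBar s
      = (h0 s (ζ + η) - (ζ + η)^2 / 2 * (π^2 * thetaBar s) - (h0 s (ζ - η) - (ζ - η)^2 / 2 * (π^2 * thetaBar s)))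
        + 2 * π * η * (π * ζ - Real.sin (π * ζ)) * thetaBar s := by ring
  rw [split]
  refine (abs_add_le _ _).trans ?_
  have t2 : |2 * π * η * (π * ζ - Real.sin (π * ζ)) * thetaBar s| ≤ 2 * π * η * (2 * (π * ζ)^2) * C := by
    rw [abs_mul, abs_mul, abs_of_nonneg (by positivity : 0 ≤ 2 * π * η)]
    gcongr
  have t1 : C * R * R * (2 * η) ≤ 4 * C * (η * (η^2 + ζ^2)) := by
    have : R * R ≤ 2 * (η^2 + ζ^2) := by rw [hR]; nlinarith [sq_nonneg (ζ - η)]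
    have : C * η * (R * R) ≤ C * η * (2 * (η^2 + ζ^2)) := mul_le_mul_of_nonneg_left this (by positivity)
    linarith
  have t3 : 2 * π * η * (2 * (π * ζ)^2) * C ≤ 4 * π^3 * C * (η * (η^2 + ζ^2)) := by
    have : 0 ≤ 4 * π^3 * C * (η * η^2) := by positivity
    linarith
  have t4 : 0 ≤ C * (η * (η^2 + ζ^2)) := by positivity
  linarith

lemma h0_cont {s : ℝ} (hs : 0 < s) : Continuous (h0 s) :=
  continuous_iff_continuousAt.mpr fun u => (h0_deriv hs u).continuousAt

lemma key_int : ∃ C : ℝ, 0 < C ∧ ∀ s : ℝ, 0 < s → ∀ ζ : ℝ,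
    ∫ η in (0:ℝ)..1, |h0 s (ζ + η) - h0 s (ζ - η)| ≤ C := by
  set A := ∑' n, ec 1 n * fq n ^ 0 with hA
  refine ⟨2 * |A| + Real.exp (π^2 / 2), by positivity, ?_⟩
  intro s hs ζ
  have hcont := h0_cont hs
  have c1 : Continuous fun η => |h0 s (ζ + η) - h0 s (ζ - η)| := by fun_prop
  have hE := Real.exp_pos (π^2 / 2)
  rcases le_total s 1 with h | h
  · set c := Real.exp (π^2 * s / 2) / 2 with hc
    have hcB : 2 * c ≤ Real.exp (π^2 / 2) := by
      have : Real.exp (π^2 * s / 2) ≤ Real.exp (π^2 / 2) := by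
        apply Real.exp_le_exp.mpr
        have : 0 < π^2 := by positivity
        nlinarith
      linarith
    have hge : ∀ u, -c ≤ h0 s u := by
      intro u
      rw [h0_eq hs u]
      have : 0 ≤ c * H0 s u := mul_nonneg (by positivity) (H0_nonneg s u)
      rw [← hc]; linarith
    have c2 : Continuous fun η => h0 s (ζ + η) + h0 s (ζ - η) + 2 * c := by fun_prop
    have mono : ∫ η in (0:ℝ)..1, |h0 s (ζ + η) - h0 s (ζ - η)| ≤ ∫ η in (0:ℝ)..1, (h0 s (ζ + η) + h0 s (ζ - η) + 2 * c) := by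
      apply intervalIntegral.integral_mono_on zero_le_one (c1.intervalIntegrable _ _) (c2.intervalIntegrable _ _)
      intro η _
      rw [abs_le]
      constructor <;> linarith [hge (ζ + η), hge (ζ - η)]
    have ev : ∫ η in (0:ℝ)..1, (h0 s (ζ + η) + h0 s (ζ - η) + 2 * c) = 
        (hm s (ζ + 1) - hm s (ζ - 1) + 2 * c * 1) - (hm s (ζ + 0) - hm s (ζ - 0) + 2 * c * 0) := by
      apply intervalIntegral.integral_eq_sub_of_hasDerivAt (f := fun η => hm s (ζ + η) - hm s (ζ - η) + 2 * c * η) _ (c2.intervalIntegrable _ _)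
      intro η _
      have d1 := (hm_deriv hs (ζ + η)).comp η ((hasDerivAt_id η).const_add ζ)
      have d2 := (hm_deriv hs (ζ - η)).comp η ((hasDerivAt_id η).const_sub ζ)
      have d3 := (hasDerivAt_id η).const_mul (2 * c)
      refine ((d1.sub d2).add d3).congr_deriv ?_
      ring
    rw [hm_period] at ev
    simp only [add_zero, sub_zero, sub_self] at ev
    have := abs_nonneg A
    linarith
  · have hb : ∀ u, |h0 s u| ≤ |A| := fun u => (tail_bd h 0 _ (fun n => bd0 s u n)).trans (le_abs_self _)
    have mono : ∫ η in (0:ℝ)..1, |h0 s (ζ + η) - h0 s (ζ - η)| ≤ ∫ η in (0:ℝ)..1, (2 * |A|) := by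
      apply intervalIntegral.integral_mono_on zero_le_one (c1.intervalIntegrable _ _) intervalIntegrable_const
      intro η _
      refine (abs_sub _ _).trans ?_
      linarith [hb (ζ + η), hb (ζ - η)]
    rw [intervalIntegral.integral_const] at mono
    simp only [sub_zero, one_smul] at mono
    linarith
lemma exp_cube {v : ℝ} (hv : 0 ≤ v) : (1 + v)^3 * Real.exp (-(v / 2)) ≤ 384 * Real.exp 1 * Real.exp (-(v / 4)) := by
  have h := Real.pow_div_factorial_le_exp (x := (1 + v) / 4) (by positivity) 3
  have h' : Real.exp ((1 + v) / 4) ≤ Real.exp (1 + v / 4) := Real.exp_le_exp.mpr (by linarith)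
  have f : (Nat.factorial 3 : ℝ) = 6 := by norm_num [Nat.factorial]
  rw [f] at h
  have h2 : (1 + v)^3 ≤ 384 * Real.exp (1 + v / 4) := by
    have e : ((1 + v) / 4)^3 / 6 = (1 + v)^3 / 384 := by ring
    rw [e] at h
    linarith
  calc (1 + v)^3 * Real.exp (-(v / 2)) ≤ 384 * Real.exp (1 + v / 4) * Real.exp (-(v / 2)) :=
        mul_le_mul_of_nonneg_right h2 (Real.exp_pos _).le
    _ = 384 * Real.exp 1 * Real.exp (-(v / 4)) := by
        rw [mul_assoc, ← Real.exp_add, mul_assoc, ← Real.exp_add]; congr 2; ring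

lemma exp_tail {a : ℝ} (ha : 0 < a) : Real.exp (-(a / 80)) ≤ (24 * 80^4) / a^4 := by
  have h := Real.pow_div_factorial_le_exp (x := a / 80) (by positivity) 4
  have f : (Nat.factorial 4 : ℝ) = 24 := by norm_num [Nat.factorial]
  rw [f] at h
  rw [Real.exp_neg]
  refine (inv_anti₀ (by positivity) h).trans (le_of_eq ?_)
  field_simp

lemma poly_bd {r v z : ℝ} (hr : 0 ≤ r) (hv : 0 ≤ v) :
    (r + v) * ((r + v)^2 + z^2) ≤ (1 + r) * (1 + r^2 + z^2) * (1 + v)^3 := by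
  have h1 : r + v ≤ (1 + r) * (1 + v) := by nlinarith [mul_nonneg hr hv]
  have h2 : (r + v)^2 + z^2 ≤ (1 + r^2 + z^2) * (1 + v)^2 := by
    have a1 : 0 ≤ z^2 * v := by positivity
    have a2 : 0 ≤ z^2 * v^2 := by positivity
    have a3 : 0 ≤ r^2 * v := by positivity
    nlinarith [sq_nonneg (r * v - 1), sq_nonneg (r - 1), mul_nonneg hv (sq_nonneg (r-1))]
  calc (r + v) * ((r + v)^2 + z^2) ≤ ((1 + r) * (1 + v)) * ((1 + r^2 + z^2) * (1 + v)^2) :=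
        mul_le_mul h1 h2 (by positivity) (by positivity)
    _ = _ := by ring

lemma int_exp_quarter (r b : ℝ) : ∫ y in r..b, Real.exp (-((y - r) / 4)) ≤ 4 := by
  have ev : ∫ y in r..b, Real.exp (-((y - r) / 4)) = -4 * Real.exp (-((b - r) / 4)) - -4 * Real.exp (-((r - r) / 4)) := by
    apply intervalIntegral.integral_eq_sub_of_hasDerivAt (f := fun y => -4 * Real.exp (-((y - r) / 4)))
    · intro y _
      have := ((((hasDerivAt_id y).sub_const r).div_const 4).neg).exp.const_mul (-4)
      refine this.congr_deriv ?_
      simp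
      ring
    · exact Continuous.intervalIntegrable (by fun_prop) _ _
  rw [ev]
  have := Real.exp_pos (-((b - r) / 4))
  simp only [sub_self, zero_div, neg_zero, Real.exp_zero]
  linarith

lemma int_main {μ : ℝ} (hμ : 0 < μ) (r b : ℝ) : ∫ y in r..b, Real.exp (-(μ * (y - r))) * y =
    (r / μ + 1 / μ^2) - (b / μ + 1 / μ^2) * Real.exp (-(μ * (b - r))) := by
  have ev : ∫ y in r..b, Real.exp (-(μ * (y - r))) * y =
      -((b / μ + 1 / μ^2) * Real.exp (-(μ * (b - r)))) - -((r / μ + 1 / μ^2) * Real.exp (-(μ * (r - r)))) := by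
    apply intervalIntegral.integral_eq_sub_of_hasDerivAt (f := fun y => -((y / μ + 1 / μ^2) * Real.exp (-(μ * (y - r)))))
    · intro y _
      have d1 := ((((hasDerivAt_id y).sub_const r).const_mul μ).neg).exp
      have d2 := ((hasDerivAt_id y).div_const μ).add_const (1 / μ^2)
      refine ((d2.mul d1).neg).congr_deriv ?_
      simp only [id, Pi.neg_apply]
      field_simp
      ring
    · exact Continuous.intervalIntegrable (by fun_prop) _ _
  rw [ev]
  simp only [sub_self, mul_zero, neg_zero, Real.exp_zero]
  ring

set_option maxHeartbeats 2000000 in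
/-- First-moment formula in terms of `θ̄` for `x ≥ r + a/20`. -/
theorem stmt17 :
    ∃ C : ℝ, 0 < C ∧ ∀ a : ℝ, π ≤ a → (1/2 : ℝ) ≤ muFn a →
      ∀ t : ℝ, 0 < t → ∀ r ∈ Set.Icc (0:ℝ) a, ∀ x ∈ Set.Icc (r + a/20) a,
      |(∫ y in r..a, pdens a t x y) -
          (2 * π * (1 + muFn a * r) * Real.exp (muFn a * (a - r)) / a^3) *
            wZ a x * thetaBar (t / a^2)| ≤
        C * (2 * π * (1 + muFn a * r) * Real.exp (muFn a * (a - r)) / a^3) *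
          ((1 + r^2 + (a - x)^2) / a) * wY a x := by
  obtain ⟨C1, hC1, key1⟩ := key_exp
  obtain ⟨C2, hC2, key2⟩ := key_int
  have hpi := Real.pi_gt_three
  have hpi0 := Real.pi_pos
  set K : ℝ := 384 * Real.exp 1 with hK
  have hK0 : 0 < K := by positivity
  set L : ℝ := 24 * 80^4 with hL
  have hL0 : 0 < L := by positivity
  refine ⟨8 * C1 * K + 8 * π^3 * C1 + 8 * π * C1 * L + C2 * L, by positivity, ?_⟩
  intro a hpa hmu t ht r hr x hx
  have ha3 : 3 < a := by linarith
  have ha : 0 < a := by linarith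
  have hr0 := hr.1
  obtain ⟨hx1, hx2⟩ := hx
  have hs : 0 < t / a^2 := by positivity
  have hmsq : muFn a ^ 2 = 1 - π^2 / a^2 := by
    unfold muFn
    apply Real.sq_sqrt
    rw [sub_nonneg, div_le_one (by positivity)]
    gcongr
  have hY : wY a x = Real.exp (muFn a * (x - a)) := rfl
  have hZ : wZ a x = a * Real.exp (muFn a * (x - a)) * Real.sin (π * x / a) := rfl
  rw [hY, hZ]
  set μ := muFn a with hμdef
  have hμ0 : 0 < μ := by linarith
  set s := t / a^2 with hsdef
  set ζ := (a - x) / a with hζ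
  have hζ0 : 0 ≤ ζ := div_nonneg (by linarith) ha.le
  have hcont := h0_cont hs
  obtain ⟨hth, hexp⟩ := key1 s hs
  set θ := thetaBar s with hθ
  have hS : Real.sin (π * x / a) = Real.sin (π * ζ) := by
    have : π * x / a = π - π * ζ := by rw [hζ]; field_simp; ring
    rw [this, Real.sin_pi_sub]
  rw [hS]
  set S := Real.sin (π * ζ) with hSdef
  set G : ℝ → ℝ := fun y => h0 s (ζ + y / a) - h0 s (ζ - y / a) with hG
  have hGc : Continuous G := by fun_prop
  set b := r + a / 40 with hb
  have hrb : r ≤ b := by rw [hb]; linarith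
  have hba : b ≤ a := by rw [hb]; linarith
  set P := 1 + μ * r with hP
  have hP1 : 1 ≤ P := by rw [hP]; nlinarith
  set Q := 1 + r^2 + (a - x)^2 with hQ
  have hQ1 : 1 ≤ Q := by rw [hQ]; nlinarith [sq_nonneg r, sq_nonneg (a - x)]
  have hX := exp_tail ha
  rw [← hL] at hX
  -- integral rewriting
  have hI : ∫ y in r..a, pdens a t x y =
      Real.exp (μ * (x - r)) * (1 / a) * ∫ y in r..a, Real.exp (-(μ * (y - r))) * G y := by
    rw [← intervalIntegral.integral_const_mul]
    apply intervalIntegral.integral_congr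
    intro y _
    simp only
    rw [pdens_eq ha ht x y]
    have : Real.exp (μ * (x - y)) = Real.exp (μ * (x - r)) * Real.exp (-(μ * (y - r))) := by
      rw [← Real.exp_add]; congr 1; ring
    rw [← hμdef, this]
    simp only [hG, ← hsdef, ← hζ]
    ring
  have hfc : Continuous fun y => Real.exp (-(μ * (y - r))) * G y := by fun_prop
  have hsplit : ∫ y in r..a, Real.exp (-(μ * (y - r))) * G y =
      (∫ y in r..b, Real.exp (-(μ * (y - r))) * G y) + ∫ y in b..a, Real.exp (-(μ * (y - r))) * G y :=
    (intervalIntegral.integral_add_adjacent_intervals (hfc.intervalIntegrable _ _) (hfc.intervalIntegrable _ _)).symm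
  set I2 := ∫ y in b..a, Real.exp (-(μ * (y - r))) * G y with hI2
  have hI1 : ∫ y in r..b, Real.exp (-(μ * (y - r))) * G y =
      (∫ y in r..b, Real.exp (-(μ * (y - r))) * (G y - 2 * π * (y / a) * S * θ)) +
        (2 * π * S * θ / a) * ∫ y in r..b, Real.exp (-(μ * (y - r))) * y := by
    rw [← intervalIntegral.integral_const_mul, ← intervalIntegral.integral_add]
    · apply intervalIntegral.integral_congr
      intro y _
      simp only
      ring
    · exact Continuous.intervalIntegrable (by fun_prop) _ _
    · exact Continuous.intervalIntegrable (by fun_prop) _ _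
  set J := ∫ y in r..b, Real.exp (-(μ * (y - r))) * (G y - 2 * π * (y / a) * S * θ) with hJ
  -- near part
  have hD1 : |J| ≤ 8 * C1 * K * P * Q / a^3 := by
    have hpt : ∀ y ∈ Set.Ioc r b, ‖Real.exp (-(μ * (y - r))) * (G y - 2 * π * (y / a) * S * θ)‖ ≤
        C1 * K * (1 + r) * Q / a^3 * Real.exp (-((y - r) / 4)) := by
      intro y hy
      have hy1 : 0 ≤ y - r := by linarith [hy.1]
      have hyb : y ≤ r + a / 40 := hy.2
      have hy0 : 0 ≤ y := by linarith
      have hsum : ζ + y / a ≤ 39/40 := by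
        rw [hζ, ← add_div, div_le_iff₀ ha]; linarith
      have he := hexp ζ (y / a) hζ0 (by positivity) hsum
      have hpoly := poly_bd (z := a - x) hr0 hy1
      rw [← hQ, show r + (y - r) = y by ring] at hpoly
      have hc := exp_cube hy1
      rw [← hK] at hc
      have hem : Real.exp (-(μ * (y - r))) ≤ Real.exp (-((y - r) / 2)) := by
        apply Real.exp_le_exp.mpr; nlinarith
      rw [norm_mul, Real.norm_eq_abs, Real.norm_eq_abs, abs_of_pos (Real.exp_pos _)]
      have e1 : C1 * (y / a * ((y / a)^2 + ζ^2)) = C1 / a^3 * (y * (y^2 + (a - x)^2)) := by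
        rw [hζ]; field_simp
      calc Real.exp (-(μ * (y - r))) * |G y - 2 * π * (y / a) * S * θ|
          ≤ Real.exp (-((y - r) / 2)) * (C1 * (y / a * ((y / a)^2 + ζ^2))) :=
            mul_le_mul hem he (abs_nonneg _) (Real.exp_pos _).le
        _ = C1 / a^3 * Real.exp (-((y - r) / 2)) * (y * (y^2 + (a - x)^2)) := by rw [e1]; ring
        _ ≤ C1 / a^3 * Real.exp (-((y - r) / 2)) * ((1 + r) * Q * (1 + (y - r))^3) :=
            mul_le_mul_of_nonneg_left hpoly (by positivity)
        _ = C1 / a^3 * ((1 + r) * Q) * ((1 + (y - r))^3 * Real.exp (-((y - r) / 2))) := by ring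
        _ ≤ C1 / a^3 * ((1 + r) * Q) * (K * Real.exp (-((y - r) / 4))) :=
            mul_le_mul_of_nonneg_left hc (by positivity)
        _ = _ := by ring
    have hn := intervalIntegral.norm_integral_le_of_norm_le (μ := volume) hrb
      (f := fun y => Real.exp (-(μ * (y - r))) * (G y - 2 * π * (y / a) * S * θ))
      (g := fun y => C1 * K * (1 + r) * Q / a^3 * Real.exp (-((y - r) / 4)))
      (Filter.Eventually.of_forall fun y hy => hpt y hy)
      (Continuous.intervalIntegrable (by fun_prop) _ _)
    rw [intervalIntegral.integral_const_mul, ← hJ, Real.norm_eq_abs] at hn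
    have h1r : 1 + r ≤ 2 * P := by rw [hP]; nlinarith
    calc |J| ≤ C1 * K * (1 + r) * Q / a^3 * ∫ y in r..b, Real.exp (-((y - r) / 4)) := hn
      _ ≤ C1 * K * (1 + r) * Q / a^3 * 4 := mul_le_mul_of_nonneg_left (int_exp_quarter r b) (by positivity)
      _ ≤ C1 * K * (2 * P) * Q / a^3 * 4 := by gcongr
      _ = _ := by ring
  -- exponential at the splitting point
  have hemb : Real.exp (-(μ * (b - r))) ≤ L / a^4 := by
    refine le_trans (Real.exp_le_exp.mpr ?_) hX
    rw [hb]; nlinarith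
  -- main part
  have hD2 : |(2 * π * S * θ / a) * ((∫ y in r..b, Real.exp (-(μ * (y - r))) * y) - P)| ≤
      (8 * π^3 * C1 * P + 8 * π * C1 * L) / a^3 := by
    rw [int_main hμ0]
    have hinv : 1 / μ ≤ 2 := by rw [div_le_iff₀ hμ0]; linarith
    have hinv2 : 1 / μ^2 ≤ 4 := by rw [div_le_iff₀ (by positivity)]; nlinarith
    have e1 : (r / μ + 1 / μ^2) - (b / μ + 1 / μ^2) * Real.exp (-(μ * (b - r))) - P =
        P * ((1 - μ^2) * (1 / μ^2)) - (b * (1 / μ) + 1 / μ^2) * Real.exp (-(μ * (b - r))) := by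
      rw [hP]; field_simp; ring
    have hb0 : 0 ≤ b := by linarith
    have b1 : |(r / μ + 1 / μ^2) - (b / μ + 1 / μ^2) * Real.exp (-(μ * (b - r))) - P| ≤
        P * (π^2 / a^2 * 4) + (4 * a) * (L / a^4) := by
      rw [e1, hmsq, show 1 - (1 - π^2 / a^2) = π^2 / a^2 by ring, ← hmsq]
      refine (abs_sub _ _).trans ?_
      rw [abs_of_nonneg (by positivity), abs_of_nonneg (by positivity)]
      have h4 : b * (1 / μ) + 1 / μ^2 ≤ 4 * a := by
        have : b * (1 / μ) ≤ a * 2 := mul_le_mul hba hinv (by positivity) ha.le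
        linarith
      gcongr
    have b2 : |2 * π * S * θ / a| ≤ 2 * π * C1 / a := by
      rw [abs_div, abs_mul, abs_mul, abs_of_pos ha, abs_of_pos (by positivity : 0 < 2 * π)]
      have : |S| ≤ 1 := Real.abs_sin_le_one _
      have : |S| * |θ| ≤ 1 * C1 := mul_le_mul this hth (abs_nonneg _) zero_le_one
      gcongr ?_ / a
      rw [mul_assoc]
      have := mul_le_mul_of_nonneg_left this (by positivity : 0 ≤ 2 * π)
      linarith
    rw [abs_mul]
    calc _ ≤ 2 * π * C1 / a * (P * (π^2 / a^2 * 4) + (4 * a) * (L / a^4)) :=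
          mul_le_mul b2 b1 (abs_nonneg _) (by positivity)
      _ = (8 * π^3 * C1 * P) / a^3 + (8 * π * C1 * L) / a^3 * (1 / a) := by field_simp; ring
      _ ≤ (8 * π^3 * C1 * P) / a^3 + (8 * π * C1 * L) / a^3 * 1 := by
          gcongr
          rw [div_le_one ha]; linarith
      _ = _ := by ring
  -- tail
  have hD3 : |I2| ≤ C2 * L / a^3 := by
    have hpt : ∀ y ∈ Set.Ioc b a, ‖Real.exp (-(μ * (y - r))) * G y‖ ≤ L / a^4 * |G y| := by
      intro y hy
      rw [norm_mul, Real.norm_eq_abs, Real.norm_eq_abs, abs_of_pos (Real.exp_pos _)]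
      refine mul_le_mul_of_nonneg_right (le_trans (Real.exp_le_exp.mpr ?_) hemb) (abs_nonneg _)
      nlinarith [hy.1]
    have hn := intervalIntegral.norm_integral_le_of_norm_le (μ := volume) hba
      (f := fun y => Real.exp (-(μ * (y - r))) * G y) (g := fun y => L / a^4 * |G y|)
      (Filter.Eventually.of_forall fun y hy => hpt y hy)
      (Continuous.intervalIntegrable (by fun_prop) _ _)
    rw [intervalIntegral.integral_const_mul, ← hI2, Real.norm_eq_abs] at hn
    have hsub : ∫ y in b..a, |G y| ≤ ∫ y in (0:ℝ)..a, |G y| := by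
      apply intervalIntegral.integral_mono_interval (by linarith) hba le_rfl
      · exact Filter.Eventually.of_forall fun y => abs_nonneg _
      · exact Continuous.intervalIntegrable (by fun_prop) _ _
    have hsc : ∫ y in (0:ℝ)..a, |G y| = a * ∫ η in (0:ℝ)..1, |h0 s (ζ + η) - h0 s (ζ - η)| := by
      have := intervalIntegral.integral_comp_div (a := 0) (b := a) (fun η => |h0 s (ζ + η) - h0 s (ζ - η)|) ha.ne'
      rw [zero_div, div_self ha.ne', smul_eq_mul] at this
      exact this
    have hk := key2 s hs ζ
    calc |I2| ≤ L / a^4 * ∫ y in b..a, |G y| := hn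
      _ ≤ L / a^4 * (a * C2) := by
          apply mul_le_mul_of_nonneg_left _ (by positivity)
          rw [hsc] at hsub
          exact hsub.trans (mul_le_mul_of_nonneg_left hk ha.le)
      _ = _ := by field_simp
  -- assembly
  set M := ∫ y in r..b, Real.exp (-(μ * (y - r))) * y with hM
  have hEE : Real.exp (μ * (a - r)) * Real.exp (μ * (x - a)) = Real.exp (μ * (x - r)) := by
    rw [← Real.exp_add]; congr 1; ring
  have lhs_eq : (∫ y in r..a, pdens a t x y) -
      (2 * π * P * Real.exp (μ * (a - r)) / a^3) * (a * Real.exp (μ * (x - a)) * S) * θ =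
      Real.exp (μ * (x - r)) * (1 / a) * (J + (2 * π * S * θ / a) * (M - P) + I2) := by
    rw [hI, hsplit, hI1, ← hEE]
    field_simp
    ring
  rw [lhs_eq, abs_mul, abs_of_pos (by positivity)]
  have rhs_eq : ∀ C : ℝ, C * (2 * π * P * Real.exp (μ * (a - r)) / a^3) * (Q / a) * Real.exp (μ * (x - a)) =
      Real.exp (μ * (x - r)) * (1 / a) * (C * (2 * π * (P * Q)) / a^3) := by
    intro C; rw [← hEE]; ring
  rw [rhs_eq]
  apply mul_le_mul_of_nonneg_left _ (by positivity)
  have tri : |J + (2 * π * S * θ / a) * (M - P) + I2| ≤ |J| + |(2 * π * S * θ / a) * (M - P)| + |I2| :=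
    abs_add_three _ _ _
  refine tri.trans ((add_le_add (add_le_add hD1 hD2) hD3).trans ?_)
  rw [← add_div, ← add_div]
  gcongr ?_ / a^3
  have hPQ : P ≤ P * Q := le_mul_of_one_le_right (by linarith) hQ1
  have hPQ1 : 1 ≤ P * Q := by linarith
  have g1 : 8 * π^3 * C1 * P ≤ 8 * π^3 * C1 * (P * Q) := mul_le_mul_of_nonneg_left hPQ (by positivity)
  have g2 : 8 * π * C1 * L ≤ 8 * π * C1 * L * (P * Q) := le_mul_of_one_le_right (by positivity) hPQ1
  have g3 : C2 * L ≤ C2 * L * (P * Q) := le_mul_of_one_le_right (by positivity) hPQ1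
  have g4 : (8 * C1 * K + 8 * π^3 * C1 + 8 * π * C1 * L + C2 * L) * (P * Q) * 1 ≤
      (8 * C1 * K + 8 * π^3 * C1 + 8 * π * C1 * L + C2 * L) * (P * Q) * (2 * π) :=
    mul_le_mul_of_nonneg_left (by linarith) (by positivity)
  linarith
end

section
/- There exists a universal constant C such that for every a ≥ π with μ = √(1 − π²/a²) ≥ 1/2 and every t > 0: (i) for all x, r ∈ [0,a] with x ≥ r + a/20 whenever t ≤ a², ∫_r^a 𝔭_t(x,y) dy ≤ C·(1+r)·(e^{μ(a−r)}/a³)·( w_Z(x) + 1_{t ≤ a²}·((1+r²)/a)·w_Y(x) ); and (ii) for all x, r ∈ [0,a], ∫_r^a 𝔭_t(x,y) dy ≤ C·e^{μ(x−r)}. -/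
open Real MeasureTheory Set Filter

lemma gs_summable (c b : ℝ) (hc : 0 < c) :
    Summable (fun n : ℤ => Real.exp (-c * ((n : ℝ) + b)^2)) := by
  have h := ((Real.summable_one_div_int_add_rpow b 2).2 (by norm_num)).mul_left (1/c)
  refine Summable.of_norm_bounded_eventually h ?_
  have hfin : {n : ℤ | (n : ℝ) + b = 0}.Finite := by
    apply Set.Subsingleton.finite
    intro m hm n hn
    have hm' : (m : ℝ) + b = 0 := hm
    have hn' : (n : ℝ) + b = 0 := hn
    have : (m : ℝ) = n := by linarith
    exact_mod_cast this
  refine hfin.subset ?_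
  intro n hn
  by_contra hne
  apply hn
  have hne' : (n : ℝ) + b ≠ 0 := hne
  have hpos : 0 < ((n : ℝ) + b)^2 := by positivity
  show ‖Real.exp (-c * ((n : ℝ) + b)^2)‖ ≤ 1/c * (1 / |(n : ℝ) + b| ^ (2:ℝ))
  rw [Real.norm_of_nonneg (Real.exp_pos _).le, Real.rpow_two, sq_abs,
    neg_mul, Real.exp_neg, one_div, one_div, ← mul_inv]
  apply inv_anti₀ (by positivity)
  linarith [Real.add_one_le_exp (c * ((n : ℝ) + b)^2)]

lemma gs_summable' (a t u : ℝ) (ha : 0 < a) (ht : 0 < t) :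
    Summable (fun n : ℤ => Real.exp (-(u + 2*a*n)^2/(2*t))) := by
  have h := gs_summable (2*a^2/t) (u/(2*a)) (by positivity)
  refine h.congr ?_
  intro n
  congr 1
  field_simp
  ring

/-- cosine series summability -/
lemma cs_summable (a t u : ℝ) (ha : 0 < a) (ht : 0 < t) :
    Summable (fun n : ℤ => Real.exp (-(π^2) * (n:ℝ)^2 * t / (2 * a^2)) * Real.cos (π * n * u / a)) := by
  have h := gs_summable (π^2*t/(2*a^2)) 0 (by positivity)
  refine Summable.of_norm_bounded h ?_
  intro n
  rw [norm_mul, Real.norm_of_nonneg (Real.exp_pos _).le]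
  have h1 : ‖Real.cos (π * n * u / a)‖ ≤ 1 := Real.abs_cos_le_one _
  calc _ ≤ Real.exp (-(π^2) * (n:ℝ)^2 * t / (2 * a^2)) * 1 := by gcongr
    _ = _ := by rw [mul_one]; congr 1; ring

lemma poisson_s18 (a t u : ℝ) (ha : 0 < a) (ht : 0 < t) :
    ∑' n : ℤ, Real.exp (-(π^2) * (n:ℝ)^2 * t / (2 * a^2)) * Real.cos (π * n * u / a)
      = (2*a) * (√(2*π*t))⁻¹ * ∑' n : ℤ, Real.exp (-(u + 2*a*n)^2/(2*t)) := by
  have hpi := Real.pi_pos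
  set τ : ℝ := π*t/(2*a^2) with hτ
  have hτ0 : 0 < τ := by positivity
  clear_value τ
  have h := Complex.tsum_exp_neg_quadratic (a := (τ:ℂ)) (by simpa using hτ0) (-Complex.I * ((u/(2*a) : ℝ):ℂ))
  have hI : Complex.I * (-Complex.I * ((u/(2*a) : ℝ):ℂ)) = ((u/(2*a) : ℝ):ℂ) := by
    linear_combination (-((u/(2*a) : ℝ):ℂ)) * Complex.I_mul_I
  rw [hI] at h
  have hR : ∀ n : ℤ, Complex.exp (-π / (τ:ℂ) * ((n:ℂ) + ((u/(2*a) : ℝ):ℂ))^2)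
      = ((Real.exp (-(u + 2*a*n)^2/(2*t)) : ℝ) : ℂ) := by
    intro n
    rw [Complex.ofReal_exp]
    congr 1
    have : -(u + 2*a*n)^2/(2*t) = -π / τ * ((n:ℝ) + (u/(2*a)))^2 := by
      rw [hτ]; field_simp; ring
    rw [this]; push_cast; ring
  simp_rw [hR] at h
  rw [← Complex.ofReal_tsum] at h
  have hk : (1 / (τ:ℂ)^(1/2:ℂ)) = (((2*a) * (√(2*π*t))⁻¹ : ℝ) : ℂ) := by
    have : (1 / (τ:ℂ)^(1/2:ℂ)) = ((1 / τ^(1/2:ℝ) : ℝ):ℂ) := by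
      rw [Complex.ofReal_div, Complex.ofReal_cpow hτ0.le]; norm_num
    rw [this]
    congr 1
    rw [← Real.sqrt_eq_rpow]
    have h2 : √(2*π*t) = 2*a*√τ := by
      rw [show 2*π*t = (2*a)^2 * τ by rw [hτ]; field_simp; try ring, Real.sqrt_mul (by positivity),
        Real.sqrt_sq (by positivity)]
    have : 0 < √τ := Real.sqrt_pos.2 hτ0
    rw [h2]; field_simp
  rw [hk, ← Complex.ofReal_mul] at h
  have hL : ∀ n : ℤ, (Complex.exp (-π * (τ:ℂ) * (n:ℂ)^2 + 2*π*(-Complex.I * ((u/(2*a) : ℝ):ℂ))*n)).re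
      = Real.exp (-(π^2) * (n:ℝ)^2 * t / (2 * a^2)) * Real.cos (π * n * u / a) := by
    intro n
    have : -π * (τ:ℂ) * (n:ℂ)^2 + 2*π*(-Complex.I * ((u/(2*a) : ℝ):ℂ))*n
        = ((-(π^2) * (n:ℝ)^2 * t / (2 * a^2) : ℝ):ℂ) + ((-(π * n * u / a) : ℝ) : ℂ) * Complex.I := by
      rw [hτ]
      have : (a:ℂ) ≠ 0 := by exact_mod_cast ha.ne'
      push_cast; field_simp
    rw [this, Complex.exp_add_mul_I]
    rw [← Complex.ofReal_exp, ← Complex.ofReal_cos, ← Complex.ofReal_sin, Complex.re_ofReal_mul,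
      Complex.add_re, Complex.ofReal_re, Complex.mul_I_re, Complex.ofReal_im, neg_zero, add_zero, Real.cos_neg]
  have hS : Summable (fun n : ℤ => Complex.exp (-π * (τ:ℂ) * (n:ℂ)^2 + 2*π*(-Complex.I * ((u/(2*a) : ℝ):ℂ))*n)) := by
    rw [← summable_norm_iff]
    refine (gs_summable (π^2*t/(2*a^2)) 0 (by positivity)).congr ?_
    intro n
    rw [Complex.norm_exp]
    congr 1
    have : -π * (τ:ℂ) * (n:ℂ)^2 + 2*π*(-Complex.I * ((u/(2*a) : ℝ):ℂ))*n
        = ((-(π^2) * (n:ℝ)^2 * t / (2 * a^2) : ℝ):ℂ) + ((-(π * n * u / a) : ℝ) : ℂ) * Complex.I := by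
      rw [hτ]
      have : (a:ℂ) ≠ 0 := by exact_mod_cast ha.ne'
      push_cast; field_simp
    rw [this, Complex.add_re, Complex.re_ofReal_mul, Complex.ofReal_re, Complex.I_re]
    ring
  have h3 := congrArg Complex.re h
  rw [Complex.re_tsum hS, Complex.ofReal_re] at h3
  simp_rw [hL] at h3
  exact h3

lemma pker_eq (a t x y : ℝ) (ha : 0 < a) (ht : 0 < t) :
    pker a t x y = (√(2*π*t))⁻¹ * (∑' n : ℤ, Real.exp (-(x - y + 2*a*n)^2/(2*t))
      - ∑' n : ℤ, Real.exp (-(x + y + 2*a*n)^2/(2*t))) := by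
  set f : ℤ → ℝ := fun n => Real.exp (-(π^2) * (n:ℝ)^2 * t / (2 * a^2)) *
    Real.sin (π * n * x / a) * Real.sin (π * n * y / a) with hf
  have h1 : ∀ n : ℤ, f n = (1/2) * (Real.exp (-(π^2) * (n:ℝ)^2 * t / (2 * a^2)) * Real.cos (π * n * (x-y) / a)
      - Real.exp (-(π^2) * (n:ℝ)^2 * t / (2 * a^2)) * Real.cos (π * n * (x+y) / a)) := by
    intro n
    simp only [hf]
    rw [show π * n * (x-y) / a = π * n * x / a - π * n * y / a by ring,
      show π * n * (x+y) / a = π * n * x / a + π * n * y / a by ring, Real.cos_sub, Real.cos_add]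
    ring
  have hs : Summable f := by
    refine Summable.congr ?_ (fun n => (h1 n).symm)
    exact ((cs_summable a t (x-y) ha ht).sub (cs_summable a t (x+y) ha ht)).mul_left _
  have heven : f.Even := by
    intro n
    simp only [hf]
    push_cast
    rw [show π * -(n:ℝ) * x / a = -(π * n * x / a) by ring, show π * -(n:ℝ) * y / a = -(π * n * y / a) by ring,
      Real.sin_neg, Real.sin_neg]
    ring_nf
  have h2 := tsum_int_eq_zero_add_two_mul_tsum_pnat heven hs
  have h0 : f 0 = 0 := by simp [hf]
  have h3 : ∑' n : ℕ+, f n = ∑' n : ℕ, f ((n+1 : ℕ) : ℤ) :=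
    tsum_pnat_eq_tsum_succ (f := fun n : ℕ => f n)
  have h4 : pker a t x y = (2/a) * ∑' n : ℕ, f ((n+1 : ℕ) : ℤ) := by
    unfold pker
    congr 1
    apply tsum_congr
    intro n
    simp only [hf]
    push_cast
    ring_nf
  have h5 : ∑' n, f n = (1/2) * (∑' n : ℤ, Real.exp (-(π^2) * (n:ℝ)^2 * t / (2 * a^2)) * Real.cos (π * n * (x-y) / a)
      - ∑' n : ℤ, Real.exp (-(π^2) * (n:ℝ)^2 * t / (2 * a^2)) * Real.cos (π * n * (x+y) / a)) := by
    rw [← (cs_summable a t (x-y) ha ht).tsum_sub (cs_summable a t (x+y) ha ht), ← tsum_mul_left]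
    exact tsum_congr h1
  rw [poisson_s18 a t _ ha ht, poisson_s18 a t _ ha ht] at h5
  rw [h0, h3, h5, nsmul_eq_mul] at h2
  rw [h4]
  have : ∑' n : ℕ, f ((n+1 : ℕ) : ℤ) = (1/2) * ((1/2) * (2 * a * (√(2 * π * t))⁻¹ * ∑' (n : ℤ), rexp (-(x - y + 2 * a * ↑n) ^ 2 / (2 * t)) -
          2 * a * (√(2 * π * t))⁻¹ * ∑' (n : ℤ), rexp (-(x + y + 2 * a * ↑n) ^ 2 / (2 * t)))) := by
    rw [h2]; push_cast; ring
  rw [this]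
  field_simp

lemma q_bound (q : ℝ) (hq : 0 ≤ q) : q^3 * (q^2 + 1) * Real.exp (-(q^2/2)) ≤ 98 := by
  have h1 : (q^2/2)^3 / (Nat.factorial 3 : ℕ) ≤ Real.exp (q^2/2) :=
    Real.pow_div_factorial_le_exp (q^2/2) (by positivity) 3
  have h2 : 1 ≤ Real.exp (q^2/2) := Real.one_le_exp (by positivity)
  have h3 : ((Nat.factorial 3 : ℕ) : ℝ) = 6 := by norm_num [Nat.factorial]
  rw [h3] at h1
  have h4 : q^3 * (q^2+1) ≤ 2 + 2 * q^6 := by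
    rcases le_total q 1 with h | h
    · have a1 : q^3 ≤ 1 := pow_le_one₀ hq h
      have a2 : q^2 ≤ 1 := pow_le_one₀ hq h
      have : q^3 * (q^2+1) ≤ 1 * 2 := by
        apply mul_le_mul a1 (by linarith) (by positivity) (by norm_num)
      nlinarith [pow_nonneg hq 6]
    · have a1 : q^5 ≤ q^6 := pow_le_pow_right₀ h (by norm_num)
      have a2 : q^3 ≤ q^6 := pow_le_pow_right₀ h (by norm_num)
      nlinarith
  rw [Real.exp_neg, ← div_eq_mul_inv, div_le_iff₀ (Real.exp_pos _)]
  have : (q^2/2)^3/6 = q^6/48 := by ring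
  rw [this] at h1
  nlinarith

lemma kap_le (s : ℝ) (hs : 0 < s) : (√(2*π*s^2))⁻¹ ≤ s⁻¹ := by
  apply inv_anti₀ hs
  apply Real.le_sqrt_of_sq_le
  nlinarith [Real.pi_gt_three, sq_nonneg s]

lemma E_bd2 (t z : ℝ) (ht : 0 < t) (hz : z ≠ 0) :
    (√(2*π*t))⁻¹ * |(z^2/t^2 - 1/t) * Real.exp (-z^2/(2*t))| ≤ 98 / |z|^3 := by
  obtain ⟨s, hs, rfl⟩ : ∃ s : ℝ, 0 < s ∧ t = s^2 :=
    ⟨√t, Real.sqrt_pos.2 ht, (Real.sq_sqrt ht.le).symm⟩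
  obtain ⟨q, hq, hqz⟩ : ∃ q : ℝ, 0 < q ∧ |z| = q * s :=
    ⟨|z|/s, by positivity, by field_simp⟩
  have hz2 : z^2 = q^2*s^2 := by rw [← sq_abs, hqz]; ring
  have hE : -z^2/(2*s^2) = -(q^2/2) := by rw [hz2]; field_simp
  have h1 : |z^2/(s^2)^2 - 1/s^2| ≤ (q^2+1)/s^2 := by
    have : z^2/(s^2)^2 - 1/s^2 = (q^2-1)/s^2 := by rw [hz2]; field_simp
    rw [this, abs_div, abs_of_pos (show 0 < s^2 by positivity)]
    gcongr
    rw [abs_le]; constructor <;> nlinarith [sq_nonneg q]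
  rw [abs_mul, abs_of_pos (Real.exp_pos _), hE, hqz]
  calc _ ≤ s⁻¹ * ((q^2+1)/s^2 * Real.exp (-(q^2/2))) := by
        have := kap_le s hs
        gcongr
    _ = (q^3 * (q^2+1) * Real.exp (-(q^2/2))) / (q*s)^3 := by field_simp
    _ ≤ _ := by have := q_bound q hq.le; gcongr

lemma E_bd0 (t z : ℝ) (ht : 0 < t) (hz : z ≠ 0) :
    (√(2*π*t))⁻¹ * Real.exp (-z^2/(2*t)) ≤ 98 * t / |z|^3 := by
  obtain ⟨s, hs, rfl⟩ : ∃ s : ℝ, 0 < s ∧ t = s^2 :=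
    ⟨√t, Real.sqrt_pos.2 ht, (Real.sq_sqrt ht.le).symm⟩
  obtain ⟨q, hq, hqz⟩ : ∃ q : ℝ, 0 < q ∧ |z| = q * s :=
    ⟨|z|/s, by positivity, by field_simp⟩
  have hz2 : z^2 = q^2*s^2 := by rw [← sq_abs, hqz]; ring
  have hE : -z^2/(2*s^2) = -(q^2/2) := by rw [hz2]; field_simp
  rw [hE, hqz]
  calc _ ≤ s⁻¹ * ((q^2+1) * Real.exp (-(q^2/2))) := by
        have := kap_le s hs
        gcongr
        have := Real.exp_pos (-(q^2/2))
        nlinarith [sq_nonneg q]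
    _ = (q^3 * (q^2+1) * Real.exp (-(q^2/2))) * s^2 / (q*s)^3 := by field_simp
    _ ≤ _ := by have := q_bound q hq.le; gcongr

lemma double_diff (h dh ddh : ℝ → ℝ) (R M d y : ℝ) (h1 : ∀ w, HasDerivAt h (dh w) w)
    (h2 : ∀ w, HasDerivAt dh (ddh w) w) (hM : ∀ w, |w| ≤ R → |ddh w| ≤ M)
    (hd : 0 ≤ d) (hy : 0 ≤ y) (hR : y + d ≤ R) :
    |h (y+d) - h (y-d) - h (-y+d) + h (-y-d)| ≤ 4 * y * d * M := by
  have hF : ∀ v, HasDerivAt (fun v => h (v+d) - h (v-d)) (dh (v+d) - dh (v-d)) v := by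
    intro v
    exact ((h1 (v+d)).comp_add_const v d).sub ((h1 (v-d)).comp_sub_const v d)
  have hF' : ∀ v ∈ Icc (-y) y, ‖dh (v+d) - dh (v-d)‖ ≤ M * (2*d) := by
    intro v hv
    have := (convex_Icc (-R) R).norm_image_sub_le_of_norm_hasDerivWithin_le (f := dh) (C := M)
      (x := v-d) (y := v+d)
      (fun x _ => (h2 x).hasDerivWithinAt) (fun x hx => hM x (abs_le.2 hx))
      ⟨by linarith [hv.1], by linarith [hv.2]⟩ ⟨by linarith [hv.1], by linarith [hv.2]⟩
    rwa [show v + d - (v-d) = 2*d by ring, Real.norm_of_nonneg (show 0 ≤ 2*d by linarith)] at this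
  have := (convex_Icc (-y) y).norm_image_sub_le_of_norm_hasDerivWithin_le
    (x := -y) (y := y)
    (fun x _ => (hF x).hasDerivWithinAt) hF'
      ⟨by linarith, by linarith⟩ ⟨by linarith, by linarith⟩
  rw [show y - -y = 2*y by ring, Real.norm_of_nonneg (show 0 ≤ 2*y by linarith), Real.norm_eq_abs] at this
  calc _ = |h (y+d) - h (y-d) - (h (-y+d) - h (-y-d))| := by congr 1; ring
    _ ≤ _ := this
    _ = _ := by ring

lemma gterm_bound (a t y d : ℝ) (ha : 0 < a) (ht : 0 < t) (hd : 0 ≤ d) (hy : 0 ≤ y)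
    (hR : y + d ≤ 39*a/40) (n : ℤ) :
    (√(2*π*t))⁻¹ * |Real.exp (-(a - (y+d) + 2*a*n)^2/(2*t)) - Real.exp (-(a - (y-d) + 2*a*n)^2/(2*t))
      - Real.exp (-(a - (-y+d) + 2*a*n)^2/(2*t)) + Real.exp (-(a - (-y-d) + 2*a*n)^2/(2*t))|
     ≤ 4 * y * d * (784000 / a^3 * (1/|(n:ℝ) + 1/2| ^ (3:ℝ))) := by
  have hκ : 0 < √(2*π*t) := Real.sqrt_pos.2 (by positivity)
  set κ := √(2*π*t) with hκd
  have key := double_diff (fun w => Real.exp (-(a - w + 2*a*n)^2/(2*t)))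
    (fun w => Real.exp (-(a - w + 2*a*n)^2/(2*t)) * ((a - w + 2*a*n)/t))
    (fun w => (((a - w + 2*a*n)^2)/t^2 - 1/t) * Real.exp (-(a - w + 2*a*n)^2/(2*t)))
    (39*a/40) (κ * (784000 / a^3 * (1/|(n:ℝ) + 1/2| ^ (3:ℝ)))) d y ?_ ?_ ?_ hd hy hR
  · rw [inv_mul_le_iff₀ hκ]
    calc _ ≤ _ := key
      _ = _ := by ring
  · intro w
    have e1 : HasDerivAt (fun w : ℝ => a - w + 2*a*n) (-1) w := by
      simpa using ((hasDerivAt_id w).const_sub a).add_const (2*a*(n:ℝ))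
    have e2 := (((e1.pow 2).neg).div_const (2*t)).exp
    refine HasDerivAt.congr_deriv e2 ?_
    simp
    field_simp
  · intro w
    have e1 : HasDerivAt (fun w : ℝ => a - w + 2*a*n) (-1) w := by
      simpa using ((hasDerivAt_id w).const_sub a).add_const (2*a*(n:ℝ))
    have e2 := (((e1.pow 2).neg).div_const (2*t)).exp
    have e3 := e2.mul (e1.div_const t)
    refine HasDerivAt.congr_deriv e3 ?_
    simp
    field_simp
    ring
  · intro w hw
    have hn : (1/2:ℝ) ≤ |(n:ℝ) + 1/2| := by
      rcases le_or_gt 0 n with h | h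
      · have : (0:ℝ) ≤ n := by exact_mod_cast h
        rw [abs_of_nonneg (by linarith)]; linarith
      · have : (n:ℝ) ≤ -1 := by exact_mod_cast (by omega : n ≤ -1)
        rw [abs_of_neg (by linarith)]; linarith
    have hz : a * |(n:ℝ) + 1/2| / 20 ≤ |a - w + 2*a*n| := by
      have h1 : |2*a*((n:ℝ)+1/2)| ≤ |a - w + 2*a*n| + |w| := by
        have := abs_add_le (a - w + 2*a*n) w
        rwa [show a - w + 2*a*n + w = 2*a*((n:ℝ)+1/2) by ring] at this
      rw [abs_mul, abs_of_pos (show 0 < 2*a by linarith)] at h1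
      nlinarith
    have hpos : 0 < a * |(n:ℝ) + 1/2| / 20 := by positivity
    have hne : a - w + 2*a*n ≠ 0 := by
      intro h0
      rw [h0, abs_zero] at hz
      linarith
    have := E_bd2 t _ ht hne
    rw [inv_mul_le_iff₀ hκ] at this
    refine this.trans ?_
    apply mul_le_mul_of_nonneg_left _ hκ.le
    rw [show ((3:ℝ)) = ((3:ℕ):ℝ) by norm_num, Real.rpow_natCast]
    calc 98 / |a - w + 2*a*n|^3 ≤ 98 / (a * |(n:ℝ) + 1/2| / 20)^3 := by gcongr
      _ = _ := by field_simp; norm_num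

lemma pker_far (a t x y : ℝ) (ha : 0 < a) (ht : 0 < t) (hx : x ≤ a) (hy : 0 ≤ y)
    (hxy : y + a/40 ≤ x) :
    pker a t x y ≤ 1568000 * (∑' n : ℤ, 1/|(n:ℝ) + 1/2| ^ (3:ℝ)) * (y * (a - x)) / a^3 := by
  have hs3 : Summable (fun n : ℤ => 1/|(n:ℝ) + 1/2| ^ (3:ℝ)) :=
    (Real.summable_one_div_int_add_rpow (1/2) 3).2 (by norm_num)
  have sA := gs_summable' a t (x-y) ha ht
  have sD := gs_summable' a t (x+y) ha ht
  have hb := gterm_bound a t y (a-x) ha ht (by linarith) hy (by linarith)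
  have eA : ∀ n : ℤ, Real.exp (-(a - (y+(a-x)) + 2*a*n)^2/(2*t)) = Real.exp (-(x - y + 2*a*n)^2/(2*t)) := by
    intro n; congr 3; ring
  have eD : ∀ n : ℤ, Real.exp (-(a - (-y+(a-x)) + 2*a*n)^2/(2*t)) = Real.exp (-(x + y + 2*a*n)^2/(2*t)) := by
    intro n; congr 3; ring
  have eB : ∀ n : ℤ, Real.exp (-(a - (y-(a-x)) + 2*a*n)^2/(2*t))
      = Real.exp (-(x + y + 2*a*((Equiv.subLeft (-1:ℤ)) n : ℤ))^2/(2*t)) := by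
    intro n; congr 2; simp only [Equiv.subLeft_apply]; push_cast; ring
  have eF : ∀ n : ℤ, Real.exp (-(a - (-y-(a-x)) + 2*a*n)^2/(2*t))
      = Real.exp (-(x - y + 2*a*((Equiv.subLeft (-1:ℤ)) n : ℤ))^2/(2*t)) := by
    intro n; congr 2; simp only [Equiv.subLeft_apply]; push_cast; ring
  simp_rw [eA, eB, eD, eF] at hb
  have sB := (Equiv.summable_iff (Equiv.subLeft (-1:ℤ))).2 sD
  have sF := (Equiv.summable_iff (Equiv.subLeft (-1:ℤ))).2 sA
  have tB := Equiv.tsum_eq (Equiv.subLeft (-1:ℤ)) (fun n : ℤ => Real.exp (-(x + y + 2*a*n)^2/(2*t)))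
  have tF := Equiv.tsum_eq (Equiv.subLeft (-1:ℤ)) (fun n : ℤ => Real.exp (-(x - y + 2*a*n)^2/(2*t)))
  have hsum := ((((sA.hasSum.sub sB.hasSum).sub sD.hasSum).add sF.hasSum).mul_left (√(2*π*t))⁻¹)
  have hsum2 := (((hs3.hasSum).mul_left (784000/a^3)).mul_left (4*y*(a-x)))
  have hle := hasSum_le (fun n => ?_) hsum hsum2
  · simp only [Function.comp_def] at hle
    rw [tB, tF] at hle
    rw [pker_eq a t x y ha ht]
    have : 1568000 * (∑' n : ℤ, 1/|(n:ℝ) + 1/2| ^ (3:ℝ)) * (y * (a - x)) / a^3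
      = (4 * y * (a - x) * (784000 / a ^ 3 * ∑' n : ℤ, 1/|(n:ℝ) + 1/2| ^ (3:ℝ))) / 2 := by ring
    rw [this]
    linarith
  · refine le_trans ?_ (hb n)
    exact mul_le_mul_of_nonneg_left (le_abs_self _) (by positivity)

lemma pker_near (a t x y : ℝ) (ha : 0 < a) (ht : 0 < t) (hta : t ≤ a^2) (hx : x ∈ Icc 0 a)
    (hy : y ∈ Icc 0 a) :
    pker a t x y ≤ (√(2*π*t))⁻¹ * Real.exp (-(y - x)^2/(2*t))
      + 98 * (∑' n : ℤ, 1/|(n:ℝ) + 0| ^ (3:ℝ)) / a := by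
  have hs3 : Summable (fun n : ℤ => 1/|(n:ℝ) + 0| ^ (3:ℝ)) :=
    (Real.summable_one_div_int_add_rpow 0 3).2 (by norm_num)
  have sA := gs_summable' a t (x-y) ha ht
  have hD : 0 ≤ ∑' n : ℤ, Real.exp (-(x + y + 2*a*n)^2/(2*t)) := tsum_nonneg fun n => (Real.exp_pos _).le
  have h1 := hasSum_ite_eq (0:ℤ) ((√(2*π*t))⁻¹ * Real.exp (-(y - x)^2/(2*t)))
  have h2 := h1.add (hs3.hasSum.mul_left (98/a))
  have h3 := hasSum_le (fun n => ?_) (sA.hasSum.mul_left (√(2*π*t))⁻¹) h2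
  · rw [pker_eq a t x y ha ht, mul_sub]
    have : 0 ≤ (√(2*π*t))⁻¹ * ∑' n : ℤ, Real.exp (-(x + y + 2*a*n)^2/(2*t)) := by positivity
    have e : 98 * (∑' n : ℤ, 1/|(n:ℝ) + 0| ^ (3:ℝ)) / a = 98 / a * (∑' n : ℤ, 1/|(n:ℝ) + 0| ^ (3:ℝ)) := by ring
    rw [e]
    linarith
  · by_cases hn : n = 0
    · subst hn
      simp
      have : (x-y)^2 = (y-x)^2 := by ring
      rw [this]
    · simp only [hn, if_false, zero_add]
      have hn1 : (1:ℝ) ≤ |(n:ℝ)| := by exact_mod_cast Int.one_le_abs hn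
      have hz : a * |(n:ℝ)| ≤ |x - y + 2*a*n| := by
        have h1 : |2*a*(n:ℝ)| ≤ |x - y + 2*a*n| + |y - x| := by
          have := abs_add_le (x - y + 2*a*n) (y-x)
          rwa [show x - y + 2*a*n + (y-x) = 2*a*(n:ℝ) by ring] at this
        have h2 : |y - x| ≤ a := by
          rw [abs_le]; constructor <;> linarith [hx.1, hx.2, hy.1, hy.2]
        rw [abs_mul, abs_of_pos (show 0 < 2*a by linarith)] at h1
        nlinarith
      have hpos : 0 < a * |(n:ℝ)| := by positivity
      have hne : x - y + 2*a*n ≠ 0 := by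
        intro h0
        rw [h0, abs_zero] at hz
        linarith
      refine (E_bd0 t _ ht hne).trans ?_
      rw [show ((3:ℝ)) = ((3:ℕ):ℝ) by norm_num, Real.rpow_natCast, add_zero]
      calc 98 * t / |x - y + 2*a*n|^3 ≤ 98 * a^2 / (a * |(n:ℝ)|)^3 := by gcongr
        _ = _ := by field_simp

lemma abs_sin_nat (n : ℕ) (θ : ℝ) : |Real.sin (n * θ)| ≤ n * |Real.sin θ| := by
  induction n with
  | zero => simp
  | succ k ih =>
    push_cast
    rw [add_mul, one_mul, Real.sin_add]
    have h1 := abs_add_le (Real.sin (k*θ) * Real.cos θ) (Real.cos (k*θ) * Real.sin θ)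
    rw [abs_mul, abs_mul] at h1
    have c1 := Real.abs_cos_le_one θ
    have c2 := Real.abs_cos_le_one (k*θ)
    have := mul_le_mul_of_nonneg_left c1 (abs_nonneg (Real.sin (k*θ)))
    have := mul_le_mul_of_nonneg_right c2 (abs_nonneg (Real.sin θ))
    linarith

lemma sum_K : Summable (fun n : ℕ => ((n:ℝ)+1)^2 * Real.exp (-(n:ℝ))) := by
  have h := Real.summable_pow_mul_exp_neg_nat_mul 2 (r := 1) (by norm_num)
  have h2 := ((summable_nat_add_iff 1).2 h).mul_left (Real.exp 1)
  refine h2.congr ?_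
  intro n
  push_cast
  rw [mul_left_comm, ← Real.exp_add]
  congr 2
  ring

lemma pker_large (a t x y : ℝ) (ha : 0 < a) (hta : a^2 ≤ t) (hx : x ∈ Icc 0 a)
    (hy : y ∈ Icc 0 a) :
    Real.exp (π^2 * t/(2*a^2)) * pker a t x y ≤ 2/a * ((∑' n : ℕ, ((n:ℝ)+1)^2 * Real.exp (-(n:ℝ))) *
      (Real.sin (π * x/a) * Real.sin (π*y/a))) := by
  have hpi := Real.pi_pos
  have hsx : 0 ≤ Real.sin (π * x/a) := by
    apply Real.sin_nonneg_of_nonneg_of_le_pi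
    · have := hx.1; positivity
    · rw [div_le_iff₀ ha]; exact mul_le_mul_of_nonneg_left hx.2 hpi.le
  have hsy : 0 ≤ Real.sin (π * y/a) := by
    apply Real.sin_nonneg_of_nonneg_of_le_pi
    · have := hy.1; positivity
    · rw [div_le_iff₀ ha]; exact mul_le_mul_of_nonneg_left hy.2 hpi.le
  have hterm : ∀ n : ℕ, |Real.exp (π^2 * t/(2*a^2)) * (Real.exp (-(π^2) * ((n : ℝ) + 1)^2 * t / (2 * a^2)) *
    Real.sin (π * ((n : ℝ) + 1) * x / a) * Real.sin (π * ((n : ℝ) + 1) * y / a))| ≤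
      ((n:ℝ)+1)^2 * Real.exp (-(n:ℝ)) * (Real.sin (π * x/a) * Real.sin (π*y/a)) := by
    intro n
    have s1 := abs_sin_nat (n+1) (π*x/a)
    have s2 := abs_sin_nat (n+1) (π*y/a)
    rw [abs_of_nonneg hsx] at s1
    rw [abs_of_nonneg hsy] at s2
    push_cast at s1 s2
    rw [show ((n:ℝ)+1) * (π*x/a) = π * ((n : ℝ) + 1) * x / a by ring] at s1
    rw [show ((n:ℝ)+1) * (π*y/a) = π * ((n : ℝ) + 1) * y / a by ring] at s2
    have he : Real.exp (π^2 * t/(2*a^2)) * Real.exp (-(π^2) * ((n : ℝ) + 1)^2 * t / (2 * a^2)) ≤ Real.exp (-(n:ℝ)) := by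
      rw [← Real.exp_add]
      apply Real.exp_le_exp.2
      have e1 : π^2 * t/(2*a^2) + -(π^2) * ((n : ℝ) + 1)^2 * t / (2 * a^2) = -((π^2/2) * (t/a^2) * ((n:ℝ)^2 + 2*n)) := by
        field_simp; ring
      rw [e1]
      have h1 : 1 ≤ t/a^2 := by rw [le_div_iff₀ (by positivity)]; linarith
      have h2 : 1 ≤ π^2/2 := by nlinarith [Real.pi_gt_three]
      have h3 : 1 ≤ (π^2/2) * (t/a^2) := one_le_mul_of_one_le_of_one_le h2 h1
      have h4 : (0:ℝ) ≤ n := Nat.cast_nonneg n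
      nlinarith [mul_le_mul_of_nonneg_right h3 (show (0:ℝ) ≤ (n:ℝ)^2 + 2*n by positivity)]
    rw [← mul_assoc, ← mul_assoc, abs_mul, abs_mul, abs_of_nonneg (by positivity)]
    calc _ ≤ Real.exp (-(n:ℝ)) * (((n:ℝ)+1) * Real.sin (π*x/a)) * (((n:ℝ)+1) * Real.sin (π*y/a)) := by
          gcongr
      _ = _ := by ring
  have hsR := sum_K.mul_right (Real.sin (π * x/a) * Real.sin (π*y/a))
  have hsL : Summable (fun n : ℕ => Real.exp (π^2 * t/(2*a^2)) * (Real.exp (-(π^2) * ((n : ℝ) + 1)^2 * t / (2 * a^2)) *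
    Real.sin (π * ((n : ℝ) + 1) * x / a) * Real.sin (π * ((n : ℝ) + 1) * y / a))) :=
    Summable.of_norm_bounded hsR hterm
  have hle := hsL.tsum_le_tsum (fun n => (le_abs_self _).trans (hterm n)) hsR
  rw [tsum_mul_left, tsum_mul_right] at hle
  unfold pker
  calc _ = 2/a * (Real.exp (π^2 * t/(2*a^2)) * ∑' n : ℕ, Real.exp (-(π^2) * ((n : ℝ) + 1)^2 * t / (2 * a^2)) *
    Real.sin (π * ((n : ℝ) + 1) * x / a) * Real.sin (π * ((n : ℝ) + 1) * y / a)) := by ring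
    _ ≤ _ := by gcongr

lemma int_le (f g : ℝ → ℝ) (r a B : ℝ) (h : r ≤ a) (hg : IntervalIntegrable g volume r a)
    (hfg : ∀ y ∈ Icc r a, f y ≤ g y) (hB : ∫ y in r..a, g y ≤ B) (h0 : 0 ≤ B) :
    ∫ y in r..a, f y ≤ B := by
  by_cases hf : IntervalIntegrable f volume r a
  · exact (intervalIntegral.integral_mono_on h hf hg hfg).trans hB
  · rw [intervalIntegral.integral_undef hf]; exact h0

lemma exp_int (r a : ℝ) : ∫ y in r..a, Real.exp (-(y-r)/4) ≤ 4 := by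
  have h : ∀ y ∈ uIcc r a, HasDerivAt (fun y => -4 * Real.exp (-(y-r)/4)) (Real.exp (-(y-r)/4)) y := by
    intro y _
    have e := ((((hasDerivAt_id y).sub_const r).neg).div_const 4).exp.const_mul (-4)
    refine HasDerivAt.congr_deriv e ?_
    simp
    ring
  rw [intervalIntegral.integral_eq_sub_of_hasDerivAt h
    (Continuous.intervalIntegrable (by fun_prop) _ _)]
  have := Real.exp_pos ((r-a)/4)
  simp
  linarith

lemma gauss_cont (t x : ℝ) : Continuous (fun y : ℝ => (√(2*π*t))⁻¹ * Real.exp (-(y - x)^2/(2*t))) := by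
  fun_prop

lemma gauss_int (r a t x : ℝ) (ht : 0 < t) (h : r ≤ a) :
    ∫ y in r..a, (√(2*π*t))⁻¹ * Real.exp (-(y - x)^2/(2*t)) ≤ 1 := by
  have hv : (⟨t, ht.le⟩ : NNReal) ≠ 0 := by
    intro h0
    exact ht.ne' (congrArg NNReal.toReal h0)
  have h1 := ProbabilityTheory.integral_gaussianPDFReal_eq_one x hv
  have h2 := ProbabilityTheory.integrable_gaussianPDFReal x ⟨t, ht.le⟩
  rw [intervalIntegral.integral_of_le h, ← h1]
  have h3 := setIntegral_le_integral (s := Ioc r a) h2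
    (ae_of_all _ (ProbabilityTheory.gaussianPDFReal_nonneg x ⟨t, ht.le⟩))
  exact h3

lemma y_exp (μ r y : ℝ) (hμ : 1/2 ≤ μ) (hr : 0 ≤ r) (hy : r ≤ y) :
    Real.exp (-(μ*(y-r))) * y ≤ 4*(1+r) * Real.exp (-(y-r)/4) := by
  set v := y - r with hv
  have hv0 : 0 ≤ v := by linarith
  have hy' : y = r + v := by linarith
  have h1 : Real.exp (-(μ*v)) ≤ Real.exp (-v/4) * Real.exp (-(v/4)) := by
    rw [← Real.exp_add]
    apply Real.exp_le_exp.2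
    nlinarith
  have h2 : y ≤ 4*(1+r) * Real.exp (v/4) := by
    have := Real.add_one_le_exp (v/4)
    have : 4*(1+r)*(v/4+1) ≤ 4*(1+r) * Real.exp (v/4) := by gcongr
    nlinarith [mul_nonneg hr hv0]
  calc _ ≤ (Real.exp (-v/4) * Real.exp (-(v/4))) * (4*(1+r) * Real.exp (v/4)) := by
        apply mul_le_mul h1 h2 (by linarith) (by positivity)
    _ = 4*(1+r) * Real.exp (-v/4) * (Real.exp (-(v/4)) * Real.exp (v/4)) := by ring
    _ = _ := by rw [← Real.exp_add]; simp

lemma sin_low (a x : ℝ) (ha : 0 < a) (h1 : a/20 ≤ x) (h2 : x ≤ a) :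
    a - x ≤ 10 * a * Real.sin (π*x/a) := by
  have hpi := Real.pi_pos
  rcases le_total x (a/2) with h | h
  · have := Real.mul_le_sin (x := π*x/a) (by have : 0 ≤ x := by linarith
                                             positivity) (by rw [div_le_div_iff₀ ha (by norm_num)]; nlinarith)
    have e : 2/π*(π*x/a) = 2*x/a := by field_simp
    rw [e, div_le_iff₀ ha] at this
    nlinarith
  · have := Real.mul_le_sin (x := π*(a-x)/a) (by have : 0 ≤ a - x := by linarith
                                                 positivity) (by rw [div_le_div_iff₀ ha (by norm_num)]; nlinarith)
    have e : 2/π*(π*(a-x)/a) = 2*(a-x)/a := by field_simp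
    have e2 : π*(a-x)/a = π - π*x/a := by field_simp
    rw [e, div_le_iff₀ ha, e2, Real.sin_pi_sub] at this
    nlinarith

lemma sin_nn (a x : ℝ) (ha : 0 < a) (hx : x ∈ Icc 0 a) : 0 ≤ Real.sin (π*x/a) := by
  have hpi := Real.pi_pos
  apply Real.sin_nonneg_of_nonneg_of_le_pi
  · have := hx.1; positivity
  · rw [div_le_iff₀ ha]; exact mul_le_mul_of_nonneg_left hx.2 hpi.le

lemma exp_small (a : ℝ) (ha : 0 < a) : Real.exp (-(a/80)) ≤ 24*80^4/a^4 := by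
  have h1 := Real.pow_div_factorial_le_exp (a/80) (by positivity) 4
  have h3 : ((Nat.factorial 4 : ℕ) : ℝ) = 24 := by norm_num [Nat.factorial]
  rw [h3] at h1
  rw [Real.exp_neg]
  calc _ ≤ ((a/80)^4/24)⁻¹ := inv_anti₀ (by positivity) h1
    _ = _ := by field_simp

/-- t large: pointwise -/
lemma pdens_large (a t x y r : ℝ) (ha : 0 < a) (hta : a^2 ≤ t) (hx : x ∈ Icc 0 a)
    (hy : y ∈ Icc 0 a) (K : ℝ) (hK : K = ∑' n : ℕ, ((n:ℝ)+1)^2 * Real.exp (-(n:ℝ))) :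
    pdens a t x y ≤ Real.exp (muFn a * (x-r)) * (Real.exp (-(muFn a*(y-r))) * (2/a * (K *
      (Real.sin (π * x/a) * Real.sin (π*y/a))))) := by
  have h := pker_large a t x y ha hta hx hy
  rw [← hK] at h
  unfold pdens
  rw [show muFn a * (x - y) + π^2*t/(2*a^2) = muFn a * (x-r) + (-(muFn a*(y-r)) + π^2*t/(2*a^2)) by ring,
    Real.exp_add, Real.exp_add, mul_assoc, mul_assoc]
  gcongr

lemma pdens_small (a t x y r B : ℝ) (ha : 0 < a) (ht : 0 < t) (hta : t ≤ a^2) (hB : 0 ≤ B)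
    (h : pker a t x y ≤ B) :
    pdens a t x y ≤ Real.exp (π^2/2) * Real.exp (muFn a * (x-r)) * (Real.exp (-(muFn a*(y-r))) * B) := by
  unfold pdens
  have h1 : Real.exp (π^2*t/(2*a^2)) ≤ Real.exp (π^2/2) := by
    apply Real.exp_le_exp.2
    rw [div_le_div_iff₀ (by positivity) (by norm_num)]
    nlinarith [sq_nonneg π]
  rw [show muFn a * (x - y) + π^2*t/(2*a^2) = π^2*t/(2*a^2) + (muFn a * (x-r) + (-(muFn a*(y-r)))) by ring,
    Real.exp_add, Real.exp_add]
  calc _ ≤ Real.exp (π^2*t/(2*a^2)) * (Real.exp (muFn a * (x-r)) * Real.exp (-(muFn a*(y-r)))) * B := by gcongr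
    _ ≤ Real.exp (π^2/2) * (Real.exp (muFn a * (x-r)) * Real.exp (-(muFn a*(y-r)))) * B := by gcongr
    _ = _ := by ring

lemma part2_large (a t x r K : ℝ) (ha : 0 < a) (hμ : 1/2 ≤ muFn a) (hta : a^2 ≤ t) (hx : x ∈ Icc 0 a)
    (hr : r ∈ Icc 0 a) (hK : K = ∑' n : ℕ, ((n:ℝ)+1)^2 * Real.exp (-(n:ℝ))) (hK0 : 0 ≤ K) :
    ∫ y in r..a, pdens a t x y ≤ 2*K*Real.exp (muFn a * (x-r)) := by
  apply int_le _ (fun _ => Real.exp (muFn a * (x-r)) * (2/a*K)) r a _ hr.2 (by simp)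
  · intro y hy
    have hy' : y ∈ Icc 0 a := ⟨hr.1.trans hy.1, hy.2⟩
    refine (pdens_large a t x y r ha hta hx hy' K hK).trans ?_
    have h1 : Real.exp (-(muFn a*(y-r))) ≤ 1 := by
      rw [Real.exp_le_one_iff]
      have : 0 ≤ muFn a * (y-r) := mul_nonneg (by linarith) (by linarith [hy.1])
      linarith
    have s1 := Real.sin_le_one (π*x/a)
    have s2 := Real.sin_le_one (π*y/a)
    have n1 := sin_nn a x ha hx
    have n2 := sin_nn a y ha hy'
    calc _ ≤ Real.exp (muFn a * (x-r)) * (1 * (2/a * (K * (1 * 1)))) := by gcongr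
      _ = _ := by ring
  · rw [intervalIntegral.integral_const, smul_eq_mul]
    have : (a - r) * (2/a) ≤ 2 := by
      rw [mul_div_assoc', div_le_iff₀ ha]; linarith [hr.1]
    calc _ = ((a-r)*(2/a)) * (K * Real.exp (muFn a * (x-r))) := by ring
      _ ≤ 2 * (K * Real.exp (muFn a * (x-r))) := by gcongr
      _ = _ := by ring
  · positivity

lemma part1_large (a t x r K : ℝ) (ha : 0 < a) (hμ : 1/2 ≤ muFn a) (hta : a^2 ≤ t) (hx : x ∈ Icc 0 a)
    (hr : r ∈ Icc 0 a) (hK : K = ∑' n : ℕ, ((n:ℝ)+1)^2 * Real.exp (-(n:ℝ))) (hK0 : 0 ≤ K) :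
    ∫ y in r..a, pdens a t x y ≤ 32*π*K*((1+r)*Real.exp (muFn a * (x-r))*(Real.sin (π*x/a)/a^2)) := by
  have hpi := Real.pi_pos
  have n1 := sin_nn a x ha hx
  have hr0 := hr.1
  apply int_le _ (fun y => (8*π*K*((1+r)*Real.exp (muFn a * (x-r))*(Real.sin (π*x/a)/a^2)))
      * Real.exp (-(y-r)/4)) r a _ hr.2 (Continuous.intervalIntegrable (by fun_prop) _ _)
  · intro y hy
    have hy' : y ∈ Icc 0 a := ⟨hr.1.trans hy.1, hy.2⟩
    refine (pdens_large a t x y r ha hta hx hy' K hK).trans ?_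
    have hyn := hy'.1
    have s2 : Real.sin (π*y/a) ≤ π*y/a := Real.sin_le (by positivity)
    have h3 := y_exp (muFn a) r y hμ hr0 hy.1
    calc _ ≤ Real.exp (muFn a * (x-r)) * (Real.exp (-(muFn a*(y-r))) * (2/a * (K *
      (Real.sin (π * x/a) * (π*y/a))))) := by gcongr
      _ = (Real.exp (muFn a * (x-r)) * (2/a) * K * Real.sin (π * x/a) * (π/a)) * (Real.exp (-(muFn a*(y-r))) * y) := by ring
      _ ≤ (Real.exp (muFn a * (x-r)) * (2/a) * K * Real.sin (π * x/a) * (π/a)) * (4*(1+r) * Real.exp (-(y-r)/4)) := by gcongr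
      _ = _ := by field_simp; ring
  · rw [intervalIntegral.integral_const_mul]
    have := exp_int r a
    calc _ ≤ (8*π*K*((1+r)*Real.exp (muFn a * (x-r))*(Real.sin (π*x/a)/a^2))) * 4 := by gcongr
      _ = _ := by ring
  · positivity

lemma part2_small (a t x r K : ℝ) (ha : 0 < a) (hμ : 1/2 ≤ muFn a) (ht : 0 < t) (hta : t ≤ a^2) (hx : x ∈ Icc 0 a)
    (hr : r ∈ Icc 0 a) (hK : K = 98 * ∑' n : ℤ, 1/|(n:ℝ) + 0| ^ (3:ℝ)) (hK0 : 0 ≤ K) :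
    ∫ y in r..a, pdens a t x y ≤ Real.exp (π^2/2) * (1+K)*Real.exp (muFn a * (x-r)) := by
  have hg := gauss_cont t x
  apply int_le _ (fun y => (Real.exp (π^2/2) * Real.exp (muFn a * (x-r))) *
    ((√(2*π*t))⁻¹ * Real.exp (-(y - x)^2/(2*t)) + K/a)) r a _ hr.2 (Continuous.intervalIntegrable (by fun_prop) _ _)
  · intro y hy
    have hy' : y ∈ Icc 0 a := ⟨hr.1.trans hy.1, hy.2⟩
    have hp := pker_near a t x y ha ht hta hx hy'
    rw [← hK] at hp
    have hB : 0 ≤ (√(2*π*t))⁻¹ * Real.exp (-(y - x)^2/(2*t)) + K/a := by positivity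
    refine (pdens_small a t x y r _ ha ht hta hB hp).trans ?_
    have h1 : Real.exp (-(muFn a*(y-r))) ≤ 1 := by
      rw [Real.exp_le_one_iff]
      have : 0 ≤ muFn a * (y-r) := mul_nonneg (by linarith) (by linarith [hy.1])
      linarith
    apply mul_le_mul_of_nonneg_left _ (by positivity)
    exact mul_le_of_le_one_left hB h1
  · rw [intervalIntegral.integral_const_mul, intervalIntegral.integral_add
      (hg.intervalIntegrable _ _) (by simp), intervalIntegral.integral_const, smul_eq_mul]
    have h1 := gauss_int r a t x ht hr.2
    have h2 : (a - r) * (K/a) ≤ K := by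
      rw [mul_div_assoc', div_le_iff₀ ha]; nlinarith [hr.1, mul_nonneg hr.1 hK0]
    calc _ ≤ (Real.exp (π^2/2) * Real.exp (muFn a * (x-r))) * (1 + K) := by gcongr
      _ = _ := by ring
  · positivity

lemma part1_small (a t x r K L : ℝ) (ha : 0 < a) (hμ : 1/2 ≤ muFn a) (ht : 0 < t) (hta : t ≤ a^2) (hx : x ∈ Icc 0 a)
    (hr : r ∈ Icc 0 a) (hrx : r + a/20 ≤ x) (hK : K = 98 * ∑' n : ℤ, 1/|(n:ℝ) + 0| ^ (3:ℝ)) (hK0 : 0 ≤ K)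
    (hL : L = 1568000 * (∑' n : ℤ, 1/|(n:ℝ) + 1/2| ^ (3:ℝ))) (hL0 : 0 ≤ L) :
    ∫ y in r..a, pdens a t x y ≤ Real.exp (π^2/2) * Real.exp (muFn a * (x-r)) *
      (160 * L * ((1+r) * (Real.sin (π*x/a)/a^2)) + 24*80^4*(1+K)/a^4) := by
  have hg := gauss_cont t x
  have hr0 := hr.1
  have n1 := sin_nn a x ha hx
  have hax : 0 ≤ a - x := by linarith [hx.2]
  apply int_le _ (fun y => (Real.exp (π^2/2) * Real.exp (muFn a * (x-r))) *
    ((4*(1+r)*L*((a-x)/a^3)) * Real.exp (-(y-r)/4) + Real.exp (-(a/80)) *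
    ((√(2*π*t))⁻¹ * Real.exp (-(y - x)^2/(2*t)) + K/a))) r a _ hr.2 (Continuous.intervalIntegrable (by fun_prop) _ _)
  · intro y hy
    have hy' : y ∈ Icc 0 a := ⟨hr.1.trans hy.1, hy.2⟩
    have hyn := hy'.1
    have hB : 0 ≤ (√(2*π*t))⁻¹ * Real.exp (-(y - x)^2/(2*t)) + K/a := by positivity
    have hA : 0 ≤ (4*(1+r)*L*((a-x)/a^3)) * Real.exp (-(y-r)/4) := by positivity
    have hBB : 0 ≤ Real.exp (-(a/80)) * ((√(2*π*t))⁻¹ * Real.exp (-(y - x)^2/(2*t)) + K/a) := by positivity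
    rcases le_total (y + a/40) x with h | h
    · have hp := pker_far a t x y ha ht hx.2 hyn h
      rw [← hL] at hp
      refine (pdens_small a t x y r _ ha ht hta (by positivity) hp).trans ?_
      apply mul_le_mul_of_nonneg_left _ (by positivity)
      have h3 := y_exp (muFn a) r y hμ hr0 hy.1
      calc _ = L * ((a-x)/a^3) * (Real.exp (-(muFn a*(y-r))) * y) := by ring
        _ ≤ L * ((a-x)/a^3) * (4*(1+r) * Real.exp (-(y-r)/4)) := by gcongr
        _ = (4*(1+r)*L*((a-x)/a^3)) * Real.exp (-(y-r)/4) := by ring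
        _ ≤ _ := le_add_of_nonneg_right hBB
    · have hp := pker_near a t x y ha ht hta hx hy'
      rw [← hK] at hp
      refine (pdens_small a t x y r _ ha ht hta hB hp).trans ?_
      apply mul_le_mul_of_nonneg_left _ (by positivity)
      have h1 : Real.exp (-(muFn a*(y-r))) ≤ Real.exp (-(a/80)) := by
        apply Real.exp_le_exp.2
        nlinarith
      calc _ ≤ Real.exp (-(a/80)) * ((√(2*π*t))⁻¹ * Real.exp (-(y - x)^2/(2*t)) + K/a) := by gcongr
        _ ≤ _ := le_add_of_nonneg_left hA
  · rw [intervalIntegral.integral_const_mul, intervalIntegral.integral_add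
      (Continuous.intervalIntegrable (by fun_prop) _ _) (Continuous.intervalIntegrable (by fun_prop) _ _),
      intervalIntegral.integral_const_mul, intervalIntegral.integral_const_mul, intervalIntegral.integral_add
      (hg.intervalIntegrable _ _) (by simp), intervalIntegral.integral_const, smul_eq_mul]
    have h1 := gauss_int r a t x ht hr.2
    have h2 : (a - r) * (K/a) ≤ K := by
      rw [mul_div_assoc', div_le_iff₀ ha]; nlinarith [hr.1, mul_nonneg hr.1 hK0]
    have h3 := exp_int r a
    have h30 : 0 ≤ ∫ y in r..a, Real.exp (-(y-r)/4) :=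
      intervalIntegral.integral_nonneg hr.2 (fun y _ => (Real.exp_pos _).le)
    have h4 := exp_small a ha
    have h5 := sin_low a x ha (by linarith) hx.2
    have h6 : (a-x)/a^3 ≤ 10 * (Real.sin (π*x/a)/a^2) := by
      calc _ ≤ (10 * a * Real.sin (π*x/a))/a^3 := by gcongr
        _ = _ := by field_simp
    apply mul_le_mul_of_nonneg_left _ (by positivity)
    apply add_le_add
    · calc _ ≤ (4*(1+r)*L*(10 * (Real.sin (π*x/a)/a^2))) * 4 := by gcongr
        _ = _ := by ring
    · calc _ ≤ Real.exp (-(a/80)) * (1+K) := by gcongr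
        _ ≤ 24*80^4/a^4*(1+K) := by gcongr
        _ = _ := by ring
  · positivity

/-- Upper bounds for the expected number of particles in `[r,a]` at time `t`. -/
theorem stmt18 :
    ∃ C : ℝ, 0 < C ∧ ∀ a : ℝ, π ≤ a → (1/2 : ℝ) ≤ muFn a → ∀ t : ℝ, 0 < t →
      (∀ x ∈ Set.Icc (0:ℝ) a, ∀ r ∈ Set.Icc (0:ℝ) a, (t ≤ a^2 → r + a/20 ≤ x) →
        (∫ y in r..a, pdens a t x y) ≤
          C * (1 + r) * (Real.exp (muFn a * (a - r)) / a^3) *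
            (wZ a x + (if t ≤ a^2 then 1 else 0) * ((1 + r^2) / a) * wY a x)) ∧
      (∀ x ∈ Set.Icc (0:ℝ) a, ∀ r ∈ Set.Icc (0:ℝ) a,
        (∫ y in r..a, pdens a t x y) ≤ C * Real.exp (muFn a * (x - r))) := by
  have hpi := Real.pi_pos
  obtain ⟨K, hK⟩ : ∃ K : ℝ, K = ∑' n : ℕ, ((n:ℝ)+1)^2 * Real.exp (-(n:ℝ)) := ⟨_, rfl⟩
  obtain ⟨M, hM⟩ : ∃ M : ℝ, M = 98 * ∑' n : ℤ, 1/|(n:ℝ) + 0| ^ (3:ℝ) := ⟨_, rfl⟩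
  obtain ⟨L, hL⟩ : ∃ L : ℝ, L = 1568000 * (∑' n : ℤ, 1/|(n:ℝ) + 1/2| ^ (3:ℝ)) := ⟨_, rfl⟩
  have hK0 : 0 ≤ K := by rw [hK]; exact tsum_nonneg fun n => by positivity
  have hM0 : 0 ≤ M := by rw [hM]; exact mul_nonneg (by norm_num) (tsum_nonneg fun n => by positivity)
  have hL0 : 0 ≤ L := by rw [hL]; exact mul_nonneg (by norm_num) (tsum_nonneg fun n => by positivity)
  obtain ⟨A, hA⟩ : ∃ A : ℝ, A = Real.exp (π^2/2) := ⟨_, rfl⟩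
  have hA0 : 0 < A := by rw [hA]; exact Real.exp_pos _
  obtain ⟨C, hC⟩ : ∃ C : ℝ, C = A * (160*L) + A*(24*80^4*(1+M)) + 32*π*K + 2*K + A*(1+M) := ⟨_, rfl⟩
  have hc1 : 0 ≤ A * (160*L) := by positivity
  have hc2 : 0 < A*(24*80^4*(1+M)) := by positivity
  have hc3 : 0 ≤ 32*π*K := by positivity
  have hc4 : 0 < A*(1+M) := by positivity
  have hC0 : 0 < C := by rw [hC]; positivity
  refine ⟨C, hC0, ?_⟩
  intro a hpa hμ t ht
  have ha : 0 < a := by linarith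
  constructor
  · intro x hx r hr hrx
    have hr0 := hr.1
    have n1 := sin_nn a x ha hx
    have hRHS : C * (1 + r) * (Real.exp (muFn a * (a - r)) / a^3) *
            (wZ a x + (if t ≤ a^2 then 1 else 0) * ((1 + r^2) / a) * wY a x)
        = C * ((1+r) * Real.exp (muFn a * (x-r)) * (Real.sin (π*x/a)/a^2)) +
          (if t ≤ a^2 then 1 else 0) * (C * ((1+r) * (1+r^2)) * Real.exp (muFn a * (x-r)) / a^4) := by
      rw [show muFn a * (x-r) = muFn a * (a-r) + muFn a * (x-a) by ring, Real.exp_add]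
      unfold wZ wY
      field_simp
    rw [hRHS]
    by_cases hta : t ≤ a^2
    · rw [if_pos hta, one_mul]
      have h := part1_small a t x r M L ha hμ ht hta hx hr (hrx hta) hM hM0 hL hL0
      rw [← hA] at h
      refine h.trans ?_
      have e1 : 1 ≤ (1+r)*(1+r^2) := one_le_mul_of_one_le_of_one_le (by linarith) (by nlinarith)
      have d1 : A * (160*L) ≤ C := by linarith
      have d2 : A*(24*80^4*(1+M)) ≤ C := by linarith
      calc _ = A * (160*L) * ((1+r) * Real.exp (muFn a * (x-r)) * (Real.sin (π*x/a)/a^2))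
            + (A*(24*80^4*(1+M)) * 1) * Real.exp (muFn a * (x-r)) / a^4 := by ring
        _ ≤ _ := by gcongr
    · rw [if_neg hta, zero_mul, add_zero]
      have h := part1_large a t x r K ha hμ (not_le.1 hta).le hx hr hK hK0
      refine h.trans ?_
      have d1 : 32*π*K ≤ C := by linarith
      gcongr
  · intro x hx r hr
    rcases le_total t (a^2) with hta | hta
    · have h := part2_small a t x r M ha hμ ht hta hx hr hM hM0
      rw [← hA] at h
      refine h.trans ?_
      have d1 : A*(1+M) ≤ C := by linarith
      gcongr
    · have h := part2_large a t x r K ha hμ hta hx hr hK hK0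
      refine h.trans ?_
      have d1 : 2*K ≤ C := by linarith
      gcongr
end

section
/- Let W be a nonnegative real random variable whose tail satisfies x·P(W > x) → 1 as x → ∞, and fix λ ∈ ℝ. Define h : [0,∞) → ℂ by h(x) = exp(iλ·log(1+x)) − 1 − iλ·x·1_{x ≤ 1}. Then the integral ∫_0^∞ h(x)·x^{−2} dx converges absolutely, and α^{−1}·E[h(αW)] → ∫_0^∞ h(x)·x^{−2} dx as α → 0+. -/
open Real MeasureTheory Set Filter

/-- The compensated characteristic integrand
`h(x) = exp(iλ·log(1+x)) − 1 − iλ·x·1_{x ≤ 1}`. -/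
noncomputable def hfun (lam x : ℝ) : ℂ :=
  Complex.exp (Complex.I * (lam : ℂ) * (Real.log (1 + x) : ℂ)) - 1 -
    Complex.I * (lam : ℂ) * (x : ℂ) * (if x ≤ 1 then 1 else 0)

noncomputable def kfun (lam t : ℝ) : ℂ :=
  Complex.I * lam * (Complex.exp (Complex.I * (lam : ℂ) * (Real.log (1 + t) : ℂ)) / (1 + t : ℝ)
    - (if t ≤ 1 then 1 else 0))

lemma kfun_meas (lam : ℝ) : Measurable (kfun lam) := by
  unfold kfun
  refine Measurable.const_mul (Measurable.sub (Measurable.div ?_ ?_) ?_) _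
  · fun_prop
  · fun_prop
  · exact Measurable.ite measurableSet_Iic measurable_const measurable_const

lemma norm_expI (lam s : ℝ) : ‖Complex.exp (Complex.I * (lam : ℂ) * (s : ℂ))‖ = 1 := by
  have : Complex.I * (lam : ℂ) * (s : ℂ) = ((lam * s : ℝ) : ℂ) * Complex.I := by push_cast; ring
  rw [this, Complex.norm_exp_ofReal_mul_I]

lemma kfun_bound (lam : ℝ) : ∃ K : ℝ, 0 ≤ K ∧ ∀ t : ℝ, 0 < t → ‖kfun lam t‖ ≤ K * (t * (1 + t ^ 2)⁻¹) := by
  refine ⟨2 * (|lam| * (|lam| + 1)), by positivity, fun t ht => ?_⟩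
  have h1t : (0:ℝ) < 1 + t := by linarith
  have hexp := norm_expI lam (Real.log (1 + t))
  have hn : ‖kfun lam t‖ = |lam| * ‖(Complex.exp (Complex.I * (lam : ℂ) * (Real.log (1 + t) : ℂ)) / (1 + t : ℝ)
    - (if t ≤ 1 then 1 else 0))‖ := by
    unfold kfun
    rw [norm_mul, norm_mul, Complex.norm_I, one_mul, Complex.norm_real, Real.norm_eq_abs]
  rw [hn, show 2 * (|lam| * (|lam| + 1)) * (t * (1 + t ^ 2)⁻¹) =
    |lam| * ((|lam| + 1) * (2 * (t * (1 + t ^ 2)⁻¹))) by ring]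
  refine mul_le_mul_of_nonneg_left ?_ (abs_nonneg lam)
  by_cases h : t ≤ 1
  · rw [if_pos h]
    have e : Complex.exp (Complex.I * (lam : ℂ) * (Real.log (1 + t) : ℂ)) / (1 + t : ℝ) - 1
       = ((Complex.exp (Complex.I * ((lam * Real.log (1 + t) : ℝ) : ℂ)) - 1) - (t : ℝ)) / (1 + t : ℝ) := by
      have : ((1 + t : ℝ) : ℂ) ≠ 0 := by exact_mod_cast h1t.ne'
      rw [eq_div_iff this, sub_mul, div_mul_cancel₀ _ this]
      push_cast
      rw [mul_assoc]; ring
    rw [e, norm_div, Complex.norm_real, Real.norm_eq_abs, abs_of_pos h1t]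
    have b1 : ‖Complex.exp (Complex.I * ((lam * Real.log (1 + t) : ℝ) : ℂ)) - 1‖ ≤ |lam| * t := by
      refine (Real.norm_exp_I_mul_ofReal_sub_one_le).trans ?_
      rw [norm_mul, Real.norm_eq_abs, Real.norm_eq_abs]
      refine mul_le_mul_of_nonneg_left ?_ (abs_nonneg _)
      rw [abs_of_nonneg (Real.log_nonneg (by linarith))]
      have := Real.log_le_sub_one_of_pos h1t
      linarith
    have b2 := norm_sub_le (Complex.exp (Complex.I * ((lam * Real.log (1 + t) : ℝ) : ℂ)) - 1) ((t : ℝ) : ℂ)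
    rw [Complex.norm_real, Real.norm_eq_abs, abs_of_pos ht] at b2
    have b3 : (1:ℝ) ≤ 2 * (1 + t ^ 2)⁻¹ := by
      rw [← div_eq_mul_inv, le_div_iff₀ (by positivity)]; nlinarith
    rw [div_le_iff₀ h1t]
    have b4 : (|lam| + 1) * t ≤ (|lam| + 1) * t * (2 * (1 + t ^ 2)⁻¹) :=
      le_mul_of_one_le_right (by positivity) b3
    have b5 : (|lam| + 1) * t * (2 * (1 + t ^ 2)⁻¹) ≤ (|lam| + 1) * t * (2 * (1 + t ^ 2)⁻¹) * (1 + t) :=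
      le_mul_of_one_le_right (by positivity) (by linarith)
    calc _ ≤ _ := b2
      _ ≤ (|lam| + 1) * t := by linarith
      _ ≤ _ := b4.trans b5
      _ = _ := by ring
  · rw [if_neg h, sub_zero, norm_div, hexp, Complex.norm_real, Real.norm_eq_abs, abs_of_pos h1t]
    push Not at h
    have b3 : 1 / (1 + t) ≤ 2 * (t * (1 + t ^ 2)⁻¹) := by
      rw [← div_eq_mul_inv, ← mul_div_assoc, div_le_div_iff₀ h1t (by positivity)]; nlinarith
    have : (0:ℝ) ≤ 2 * (t * (1 + t ^ 2)⁻¹) := by positivity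
    have b5 := le_mul_of_one_le_left this (show 1 ≤ |lam| + 1 by linarith [abs_nonneg lam])
    linarith

lemma kfun_int (lam x : ℝ) (hx : 0 ≤ x) :
    ∫ t in Ioc 0 x, kfun lam t = hfun lam x - Complex.I * lam * (if 1 < x then 1 else 0) := by
  have hD : ∀ t ∈ uIcc 0 x, HasDerivAt (fun t : ℝ => Complex.exp (Complex.I * (lam : ℂ) * (Real.log (1 + t) : ℂ)))
      (Complex.I * lam * (Complex.exp (Complex.I * (lam : ℂ) * (Real.log (1 + t) : ℂ)) / (1 + t : ℝ))) t := by
    intro t ht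
    rw [uIcc_of_le hx] at ht
    have h1 : HasDerivAt (fun t : ℝ => Real.log (1 + t)) (1 / (1 + t)) t :=
      ((hasDerivAt_id t).const_add 1).log (by have := ht.1; simp; linarith)
    have h2 := (h1.ofReal_comp.const_mul (Complex.I * (lam : ℂ))).cexp
    convert h2 using 1
    push_cast; ring
  have hcont : ContinuousOn (fun t : ℝ => Complex.I * lam * (Complex.exp (Complex.I * (lam : ℂ) * (Real.log (1 + t) : ℂ)) / (1 + t : ℝ))) (uIcc 0 x) := by
    rw [uIcc_of_le hx]
    have hne : ∀ t ∈ Icc 0 x, (1 + t) ≠ 0 := fun t ht => by have := ht.1; linarith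
    have hl : ContinuousOn (fun t : ℝ => Real.log (1 + t)) (Icc 0 x) :=
      ContinuousOn.log (by fun_prop) hne
    refine ContinuousOn.mul continuousOn_const (ContinuousOn.div ?_ (by fun_prop) ?_)
    · exact (continuousOn_const.mul (Complex.continuous_ofReal.comp_continuousOn hl)).cexp
    · intro t ht; exact_mod_cast hne t ht
  have hint := hcont.intervalIntegrable (μ := volume)
  have hF := intervalIntegral.integral_eq_sub_of_hasDerivAt hD hint
  rw [intervalIntegral.integral_of_le hx] at hF
  have hsplit : ∀ t, kfun lam t = Complex.I * lam * (Complex.exp (Complex.I * (lam : ℂ) * (Real.log (1 + t) : ℂ)) / (1 + t : ℝ)) - (Iic (1:ℝ)).indicator (fun _ => Complex.I * (lam:ℂ)) t := by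
    intro t
    unfold kfun
    by_cases h : t ≤ 1 <;> simp [h, mul_sub]
  simp_rw [hsplit]
  rw [integral_sub hint.1, hF, setIntegral_indicator measurableSet_Iic, setIntegral_const]
  · rw [show Ioc 0 x ∩ Iic 1 = Ioc 0 (min x 1) by ext t; simp [and_assoc], measureReal_def, Real.volume_Ioc]
    unfold hfun
    by_cases h : x ≤ 1
    · rw [min_eq_left h, if_pos h, if_neg (not_lt.2 h), sub_zero, ENNReal.toReal_ofReal hx]
      simp; ring
    · rw [min_eq_right (le_of_not_ge h), if_neg h, if_pos (lt_of_not_ge h)]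
      simp
  · exact (integrable_const _).indicator measurableSet_Iic

lemma kfun_div_int (lam : ℝ) (C : ℝ) : IntegrableOn (fun t => ‖kfun lam t‖ * (C / t)) (Ioi 0) := by
  obtain ⟨K, hK, hb⟩ := kfun_bound lam
  refine Integrable.mono' (g := fun t => (K * |C|) * (1 + t ^ 2)⁻¹)
    ((integrable_inv_one_add_sq.const_mul _).integrableOn) ?_ ?_
  · exact ((kfun_meas lam).norm.mul (by fun_prop)).aestronglyMeasurable
  · filter_upwards [ae_restrict_mem measurableSet_Ioi] with t ht
    have ht : 0 < t := ht
    rw [norm_mul, norm_norm, norm_div, Real.norm_eq_abs, Real.norm_eq_abs, abs_of_pos ht]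
    calc _ ≤ K * (t * (1 + t ^ 2)⁻¹) * (|C| / t) :=
          mul_le_mul_of_nonneg_right (hb t ht) (by positivity)
      _ = _ := by field_simp

lemma key {Ω : Type*} [MeasurableSpace Ω] (μ : Measure Ω) [SFinite μ] (X : Ω → ℝ)
    (hX : Measurable X) (hX0 : ∀ᵐ ω ∂μ, 0 ≤ X ω) (C : ℝ)
    (hC : ∀ t, 0 < t → μ {ω | t < X ω} ≤ ENNReal.ofReal (C / t)) (lam : ℝ) :
    Integrable (fun ω => hfun lam (X ω)) μ ∧
    ∫ ω, hfun lam (X ω) ∂μ = (∫ t in Ioi (0:ℝ), kfun lam t * (μ.real {ω | t < X ω} : ℂ)) +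
      Complex.I * lam * (μ.real {ω | 1 < X ω} : ℂ) := by
  set f : Ω × ℝ → ℂ := {p : Ω × ℝ | p.2 < X p.1}.indicator (fun p => kfun lam p.2) with hf
  have hfm : Measurable f :=
    ((kfun_meas lam).comp measurable_snd).indicator
      (measurableSet_lt measurable_snd (hX.comp measurable_fst))
  have hms : ∀ t, MeasurableSet {ω | t < X ω} := fun t => measurableSet_lt measurable_const hX
  have hfin : ∀ t, 0 < t → μ {ω | t < X ω} ≠ ⊤ := fun t ht =>
    ne_top_of_le_ne_top ENNReal.ofReal_ne_top (hC t ht)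
  have hft : ∀ t, (fun ω => f (ω, t)) = {ω | t < X ω}.indicator (fun _ => kfun lam t) := by
    intro t; ext ω; simp [hf, indicator]
  have hfi : Integrable f (μ.prod (volume.restrict (Ioi (0:ℝ)))) := by
    rw [integrable_prod_iff' hfm.aestronglyMeasurable]
    constructor
    · filter_upwards [ae_restrict_mem measurableSet_Ioi] with t ht
      rw [hft, integrable_indicator_iff (hms t)]
      exact integrableOn_const (hfin t ht)
    · refine (kfun_div_int lam |C|).mono' ?_ ?_
      · exact hfm.norm.stronglyMeasurable.integral_prod_left'.aestronglyMeasurable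
      · filter_upwards [ae_restrict_mem measurableSet_Ioi] with t ht
        have ht : 0 < t := ht
        have : (fun ω => ‖f (ω, t)‖) = {ω | t < X ω}.indicator (fun _ => ‖kfun lam t‖) := by
          ext ω; simp [hf, indicator]; split_ifs <;> simp
        rw [this, integral_indicator_const _ (hms t), smul_eq_mul, norm_mul, norm_norm, mul_comm]
        refine mul_le_mul_of_nonneg_left ?_ (norm_nonneg _)
        rw [Real.norm_eq_abs, abs_of_nonneg measureReal_nonneg]
        refine ENNReal.toReal_le_of_le_ofReal (by positivity) ((hC t ht).trans ?_)
        apply ENNReal.ofReal_le_ofReal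
        gcongr
        exact le_abs_self C
  have hswap := integral_integral_swap (f := fun ω t => f (ω, t)) hfi
  have hinner : ∀ᵐ ω ∂μ, ∫ t in Ioi (0:ℝ), f (ω, t) =
      hfun lam (X ω) - {ω | 1 < X ω}.indicator (fun _ => Complex.I * (lam:ℂ)) ω := by
    filter_upwards [hX0] with ω h0
    have : (fun t => f (ω, t)) = (Iio (X ω)).indicator (kfun lam) := by
      ext t; simp [hf, indicator]
    rw [this, setIntegral_indicator measurableSet_Iio, Ioi_inter_Iio, ← integral_Ioc_eq_integral_Ioo,
      kfun_int lam _ h0]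
    simp [indicator]
  have hind : Integrable ({ω | 1 < X ω}.indicator (fun _ => Complex.I * (lam:ℂ))) μ := by
    rw [integrable_indicator_iff (hms 1)]
    exact integrableOn_const (hfin 1 one_pos)
  have h1 := (hfi.integral_prod_left.congr hinner)
  have hI : Integrable (fun ω => hfun lam (X ω)) μ := by
    have := h1.add hind
    refine this.congr (ae_of_all _ fun ω => ?_)
    simp
  refine ⟨hI, ?_⟩
  rw [integral_congr_ae hinner, integral_sub hI hind, integral_indicator_const _ (hms 1)] at hswap
  simp_rw [hft] at hswap
  rw [sub_eq_iff_eq_add] at hswap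
  rw [hswap]
  congr 1
  · refine integral_congr_ae (ae_of_all _ fun t => ?_)
    simp only
    rw [integral_indicator_const _ (hms t), Complex.real_smul, mul_comm]
  · rw [Complex.real_smul, mul_comm]

lemma tail_sq (t : ℝ) (ht : 0 < t) :
    ((volume.restrict (Ioi (0:ℝ))).withDensity (fun x => ENNReal.ofReal ((x ^ 2)⁻¹))) {x : ℝ | t < x}
      = ENNReal.ofReal (1 / t) := by
  rw [show {x : ℝ | t < x} = Ioi t from rfl]
  rw [withDensity_apply _ measurableSet_Ioi, Measure.restrict_restrict measurableSet_Ioi,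
    inter_eq_left.2 (Ioi_subset_Ioi ht.le)]
  have e : ∀ x ∈ Ioi t, x ^ (-2 : ℝ) = (x ^ 2)⁻¹ := fun x hx => by
    have : 0 < x := ht.trans hx
    rw [Real.rpow_neg this.le]; norm_cast
  have hi : IntegrableOn (fun x : ℝ => (x ^ 2)⁻¹) (Ioi t) :=
    (integrableOn_Ioi_rpow_of_lt (by norm_num : (-2:ℝ) < -1) ht).congr_fun e measurableSet_Ioi
  rw [← ofReal_integral_eq_lintegral_ofReal hi (ae_of_all _ fun x => by positivity),
    ← setIntegral_congr_fun measurableSet_Ioi e, integral_Ioi_rpow_of_lt (by norm_num) ht]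
  congr 1
  norm_num
  rw [Real.rpow_neg_one]

lemma tail_bound {Ω : Type*} [MeasurableSpace Ω] (μ : Measure Ω) [IsProbabilityMeasure μ] (W : Ω → ℝ)
    (htail : Tendsto (fun x : ℝ => x * (μ {ω | x < W ω}).toReal) atTop (nhds 1)) :
    ∃ C : ℝ, 0 ≤ C ∧ ∀ x, 0 < x → x * μ.real {ω | x < W ω} ≤ C := by
  obtain ⟨x0, h0⟩ := eventually_atTop.1 (htail.eventually_le_const (show (1:ℝ) < 2 by norm_num))
  refine ⟨max 2 x0, le_max_of_le_left (by norm_num), fun x hx => ?_⟩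
  rcases le_total x0 x with h | h
  · exact (h0 x h).trans (le_max_left _ _)
  · calc _ ≤ x * 1 := mul_le_mul_of_nonneg_left measureReal_le_one hx.le
      _ ≤ _ := by rw [mul_one]; exact h.trans (le_max_right _ _)

/-- If `W ≥ 0` satisfies `x·P(W > x) → 1` as `x → ∞`, then `∫_0^∞ h(x)/x² dx`
converges absolutely and `α⁻¹·E[h(αW)] → ∫_0^∞ h(x)/x² dx` as `α → 0+`. -/
theorem stmt19 {Ω : Type*} [MeasureSpace Ω]
    (hP : IsProbabilityMeasure (volume : Measure Ω))
    (W : Ω → ℝ) (hW : Measurable W) (hWnonneg : ∀ ω, 0 ≤ W ω)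
    (htail : Filter.Tendsto (fun x : ℝ => x * (volume {ω | x < W ω}).toReal)
      Filter.atTop (nhds 1))
    (lam : ℝ) :
    MeasureTheory.IntegrableOn (fun x : ℝ => hfun lam x / (x : ℂ)^2) (Set.Ioi 0) ∧
    Filter.Tendsto (fun α : ℝ => (α : ℂ)⁻¹ * ∫ ω, hfun lam (α * W ω))
      (nhdsWithin 0 (Set.Ioi 0))
      (nhds (∫ x in Set.Ioi (0:ℝ), hfun lam x / (x : ℂ)^2)) := by
  set ν := (volume.restrict (Ioi (0:ℝ))).withDensity (fun x => ENNReal.ofReal ((x ^ 2)⁻¹)) with hν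
  have hdm : Measurable (fun x : ℝ => ENNReal.ofReal ((x ^ 2)⁻¹)) := by fun_prop
  have hdf : ∀ᵐ x ∂(volume.restrict (Ioi (0:ℝ))), ENNReal.ofReal ((x ^ 2)⁻¹) < ⊤ :=
    ae_of_all _ fun x => ENNReal.ofReal_lt_top
  have hsm : ∀ x : ℝ, (ENNReal.ofReal ((x ^ 2)⁻¹)).toReal • hfun lam x = hfun lam x / (x : ℂ)^2 := by
    intro x
    rw [ENNReal.toReal_ofReal (by positivity), Complex.real_smul, div_eq_mul_inv, mul_comm]
    push_cast; rfl
  have hν0 : ∀ᵐ x ∂ν, (0:ℝ) ≤ x := by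
    refine (withDensity_absolutelyContinuous _ _).ae_le ?_
    filter_upwards [ae_restrict_mem measurableSet_Ioi] with x hx using le_of_lt hx
  obtain ⟨kI, kE⟩ := key ν (fun x => x) measurable_id hν0 1 (fun t ht => (tail_sq t ht).le) lam
  rw [hν, integrable_withDensity_iff_integrable_smul' hdm hdf] at kI
  rw [hν, integral_withDensity_eq_integral_toReal_smul hdm hdf, ← hν] at kE
  simp_rw [hsm] at kI kE
  refine ⟨kI, ?_⟩
  have hνr : ∀ t, 0 < t → ν.real {x | t < x} = 1 / t := fun t ht => by
    rw [measureReal_def, hν, tail_sq t ht, ENNReal.toReal_ofReal (by positivity)]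
  obtain ⟨C, hC0, hC⟩ := tail_bound (volume : Measure Ω) W htail
  have hset : ∀ α : ℝ, 0 < α → ∀ t, {ω | t < α * W ω} = {ω | t / α < W ω} := by
    intro α hα t; ext ω
    simp only [mem_ofPred_eq]
    rw [div_lt_iff₀ hα, mul_comm]
  have hb : ∀ α : ℝ, 0 < α → ∀ t, 0 < t →
      α⁻¹ * (volume : Measure Ω).real {ω | t < α * W ω} ≤ C / t := by
    intro α hα t ht
    rw [hset α hα, le_div_iff₀ ht]
    have := hC (t / α) (by positivity)
    calc _ = t / α * (volume : Measure Ω).real {ω | t / α < W ω} := by ring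
      _ ≤ _ := this
  have hlim : ∀ t, 0 < t → Tendsto (fun α : ℝ => α⁻¹ * (volume : Measure Ω).real {ω | t < α * W ω})
      (nhdsWithin 0 (Ioi 0)) (nhds (1 / t)) := by
    intro t ht
    have h1 : Tendsto (fun α : ℝ => t / α) (nhdsWithin 0 (Ioi 0)) atTop := by
      simp_rw [div_eq_mul_inv]
      exact tendsto_inv_nhdsGT_zero.const_mul_atTop ht
    have h2 := (htail.comp h1).mul_const (1 / t)
    rw [one_mul] at h2
    refine h2.congr' ?_
    filter_upwards [self_mem_nhdsWithin] with α hα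
    have hα : 0 < α := hα
    rw [hset α hα, measureReal_def]
    simp only [Function.comp]
    field_simp
  have hform : ∀ α : ℝ, 0 < α → (α : ℂ)⁻¹ * ∫ ω, hfun lam (α * W ω) =
      (∫ t in Ioi (0:ℝ), kfun lam t * ((α⁻¹ * (volume : Measure Ω).real {ω | t < α * W ω} : ℝ) : ℂ)) +
      Complex.I * lam * ((α⁻¹ * (volume : Measure Ω).real {ω | 1 < α * W ω} : ℝ) : ℂ) := by
    intro α hα
    have := (key (volume : Measure Ω) (fun ω => α * W ω) (by fun_prop)
      (ae_of_all _ fun ω => mul_nonneg hα.le (hWnonneg ω)) (α * C) (fun t ht => by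
        have h := hb α hα t ht
        rw [← ENNReal.ofReal_toReal (measure_ne_top volume {ω | t < α * W ω})]
        apply ENNReal.ofReal_le_ofReal
        rw [inv_mul_le_iff₀ hα] at h
        rw [mul_div_assoc]
        exact h) lam).2
    rw [this, mul_add, ← integral_const_mul]
    congr 1
    · refine integral_congr_ae (ae_of_all _ fun t => ?_)
      push_cast; ring
    · push_cast; ring
  have hR : ∫ x in Set.Ioi (0:ℝ), hfun lam x / (x : ℂ)^2 =
      (∫ t in Ioi (0:ℝ), kfun lam t * ((1 / t : ℝ) : ℂ)) + Complex.I * lam * ((1 / 1 : ℝ) : ℂ) := by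
    rw [kE, hνr 1 one_pos]
    congr 1
    refine setIntegral_congr_fun measurableSet_Ioi fun t ht => ?_
    rw [hνr t ht]
  rw [hR]
  have hev : ∀ᶠ α : ℝ in nhdsWithin 0 (Ioi 0), 0 < α := self_mem_nhdsWithin
  refine Tendsto.congr' (hev.mono fun α hα => (hform α hα).symm) ?_
  refine Tendsto.add ?_ ?_
  · refine tendsto_integral_filter_of_dominated_convergence (fun t => ‖kfun lam t‖ * (C / t)) ?_ ?_
      (kfun_div_int lam C) ?_
    · filter_upwards [hev] with α hα
      have hanti : Antitone (fun t : ℝ => (volume : Measure Ω).real {ω | t < α * W ω}) :=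
        fun s t hst => measureReal_mono (fun ω (hω : t < _) => lt_of_le_of_lt hst hω)
      exact ((kfun_meas lam).mul (Complex.measurable_ofReal.comp
        (hanti.measurable.const_mul _))).aestronglyMeasurable
    · filter_upwards [hev] with α hα
      filter_upwards [ae_restrict_mem measurableSet_Ioi] with t ht
      rw [norm_mul, Complex.norm_real, Real.norm_eq_abs,
        abs_of_nonneg (mul_nonneg (inv_nonneg.2 hα.le) measureReal_nonneg)]
      exact mul_le_mul_of_nonneg_left (hb α hα t ht) (norm_nonneg _)
    · filter_upwards [ae_restrict_mem measurableSet_Ioi] with t ht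
      exact ((Complex.continuous_ofReal.tendsto _).comp (hlim t ht)).const_mul _
  · exact ((Complex.continuous_ofReal.tendsto _).comp (hlim 1 one_pos)).const_mul _
end
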